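/- arXiv:1509.07067 — 6 statements merged into one kernel-verified Lean document; each statement's English description precedes it below -/
import Mathlib

section
/- Let (X, σ) be a left non-degenerate braided set satisfying a·a = a⊛a for all a ∈ X, and write t(a) := a·a. Let M be a solid right module over (X,σ) (each a ∈ X acts bijectively on M; write m ↦ m∙a^{−1} for the inverse) and N a left module over (X,σ). With C_k := M × X^k × N and the boundaries d_i, d'_i and maps χ_i as in [T:HomEquiv], define s_i(m, y₁,…,y_k, ν) := (m∙t(χ_i(ȳ))^{−1}, y₁, …, y_{i−1}, y_i, y_i, y_{i+1}, …, y_k, ν). Then (C_k, d'_i, d_i, s_i) — with d'_i playing the role of d⁺ and d_i of d⁻ — is a semi-strong skew cubical structure in Set. Consequently, for every abelian group A, the abelian groups C_k(A) := ⊕_{c ∈ M×X^k×N} A decompose as C_k(A) = C_k^D ⊕ C_k^N, where C_k^D is the subgroup generated by the images of the (linearized) s_i and C_k^N is the image of the linearization of η_k := (Id − s_1∘d'_2)∘⋯∘(Id − s_{k−1}∘d'_k), and for all α, β ∈ ℤ this decomposition is preserved by the differential ∂_k := α·∑_{i=1}^{k}(−1)^{i−1} d'_i + β·∑_{i=1}^{k}(−1)^{i−1}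 d_i (maps extended linearly). -/
/-- `σ` applied at positions 1,2 of `X × X × X`. -/
def s12 {X : Type*} (σ : X × X → X × X) : X × X × X → X × X × X :=
  fun p => ((σ (p.1, p.2.1)).1, (σ (p.1, p.2.1)).2, p.2.2)

/-- `σ` applied at positions 2,3 of `X × X × X`. -/
def s23 {X : Type*} (σ : X × X → X × X) : X × X × X → X × X × X :=
  fun p => (p.1, σ p.2)

/-- The guitar map `J`, with components `J_i = r(…r(r(x_i,x_{i+1}),x_{i+2})…,x_n)`. -/
def guitar {X : Type*} (σ : X × X → X × X) : List X → List X
  | [] => []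
  | x :: t => (t.foldl (fun a b => (σ (a, b)).2) x) :: guitar σ t

/-- The map `χ_i(ȳ)`: the first component of
`J⁻¹(((y_i ◃ y_{i-1}) ◃ ⋯) ◃ y₁, y₁, …, y_{i-1}, y_{i+1}, …, y_k)`. -/
def chiL {X : Type*} (tri : X → X → X) (Jinv : List X → List X)
    (i : ℕ) (ys : List X) : Option X :=
  match ys[i - 1]? with
  | some x =>
      (Jinv ((((ys.take (i - 1)).reverse).foldl tri x)
        :: (ys.take (i - 1) ++ ys.drop i))).head?
  | none => none

/-- The boundary
`d_i(m, ȳ, ν) = (m, y_i⊛y₁,…,y_i⊛y_{i-1}, y_i·y_{i+1},…,y_i·y_k, y_i∙ν)`. -/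
def dCyc {X M N : Type*} (star dot : X → X → X) (actN : X → N → N) (i : ℕ) :
    M × List X × N → M × List X × N :=
  fun p =>
    match p.2.1[i - 1]? with
    | some x =>
        (p.1, ((p.2.1.take (i - 1)).map (fun a => star x a))
          ++ ((p.2.1.drop i).map (fun a => dot x a)), actN x p.2.2)
    | none => p

/-- The boundary `d'_i(m, ȳ, ν) = (m∙χ_i(ȳ), y₁,…,y_{i-1},y_{i+1},…,y_k, ν)`. -/
def dPrime {X M N : Type*} (tri : X → X → X) (Jinv : List X → List X)
    (actM : M → X → M) (i : ℕ) : M × List X × N → M × List X × N :=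
  fun p =>
    match chiL tri Jinv i p.2.1 with
    | some c => (actM p.1 c, p.2.1.eraseIdx (i - 1), p.2.2)
    | none => p

/-- The degeneracy
`s_i(m, y₁,…,y_k, ν) = (m∙t(χ_i(ȳ))⁻¹, y₁,…,y_{i-1}, y_i, y_i, y_{i+1},…,y_k, ν)`. -/
def sCyc {X M N : Type*} (tri : X → X → X) (Jinv : List X → List X)
    (tmap : X → X) (actMinv : M → X → M) (i : ℕ) :
    M × List X × N → M × List X × N :=
  fun p =>
    match chiL tri Jinv i p.2.1, p.2.1[i - 1]? with
    | some c, some x =>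
        (actMinv p.1 (tmap c), p.2.1.take i ++ x :: p.2.1.drop i, p.2.2)
    | _, _ => p

/-- The subgroup of `⊕_{c : I} A` supported on basis elements of level `k`. -/
noncomputable def levC {I A : Type*} [AddCommGroup A] (len : I → ℕ) (k : ℕ) :
    Submodule ℤ (I →₀ A) :=
  Finsupp.supported A ℤ {c : I | len c = k}

/-- The linearized differential
`∂ = α·∑_{i=1}^{k}(−1)^{i−1} d'_i + β·∑_{i=1}^{k}(−1)^{i−1} d_i`
(on a basis element of level `k`). -/
noncomputable def bdryC {I A : Type*} [AddCommGroup A] (len : I → ℕ)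
    (dP dM : ℕ → I → I) (α β : ℤ) : (I →₀ A) →ₗ[ℤ] (I →₀ A) :=
  Finsupp.lsum ℕ fun c => ∑ i ∈ Finset.range (len c),
    ((α * (-1 : ℤ) ^ i) • (Finsupp.lsingle (dP (i + 1) c) : A →ₗ[ℤ] (I →₀ A))
      + (β * (-1 : ℤ) ^ i) • (Finsupp.lsingle (dM (i + 1) c) : A →ₗ[ℤ] (I →₀ A)))

/-- The linearization of `η_k = (Id − s_1∘d'_2)∘⋯∘(Id − s_{k−1}∘d'_k)`. -/
noncomputable def etaC {I A : Type*} [AddCommGroup A] (sS dP : ℕ → I → I)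
    (k : ℕ) : (I →₀ A) →ₗ[ℤ] (I →₀ A) :=
  (List.range (k - 1)).foldl
    (fun acc i => acc.comp
      (LinearMap.id - Finsupp.lmapDomain A ℤ (fun c => sS (i + 1) (dP (i + 2) c))))
    LinearMap.id

/-- The degenerate part `C_k^D = ∑_{i=1}^{k-1} Im (s_i : C_{k-1}(A) → C_k(A))`. -/
noncomputable def degPart {I A : Type*} [AddCommGroup A] (len : I → ℕ)
    (sS : ℕ → I → I) (k : ℕ) : Submodule ℤ (I →₀ A) :=
  ⨆ i ∈ Finset.Icc 1 (k - 1),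
    Submodule.map (Finsupp.lmapDomain A ℤ (sS i)) (levC len (k - 1))

/-- The normalized part `C_k^N = Im η_k`. -/
noncomputable def normPart {I A : Type*} [AddCommGroup A] (len : I → ℕ)
    (sS dP : ℕ → I → I) (k : ℕ) : Submodule ℤ (I →₀ A) :=
  Submodule.map (etaC sS dP k) (levC len k)

/-!
The letter `χ_i(ȳ)` is what becomes of `y_i` when all the other letters of `ȳ` are erased by the
boundaries `d_j`, in any order. Hence `χ` is unchanged by the `d_j`. If erasing everything except
`y_i` and `y_j` (`i < j`) leaves the word `(U, V)`, then `χ_i(ȳ) = V ⊛ U` and `χ_j(ȳ) = U · V`,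
while `U` and `V` are the values of `χ` at `y_i` and `y_j` once the other of the two letters is
omitted from `ȳ`. In the coordinate `M`, all cubical identities thereby become identities in two
letters, and these follow from the q-cycle identities and `a · a = a ⊛ a`.

For the splitting, the identities imply that `η_k` kills the degenerate chains, is congruent to the
identity modulo them, and maps onto the common kernel of the `d'_j` with `j ≥ 2`. This kernel is
stable under both alternating sums of faces because faces commute up to a shift of indices.
-/

/-! ### Braided sets, q-cycle identities and the letters `χ_i` -/

section Algebra

variable {X M : Type*}

/-- A left non-degenerate braided set `(X, σ)` together with its operations
`star b a = b ⊛ a` and `dot a b = a · b`. -/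
structure IsLeftNondegenerateBraided (σ : X × X → X × X) (star dot : X → X → X) : Prop where
  yangBaxter : s12 σ ∘ s23 σ ∘ s12 σ = s23 σ ∘ s12 σ ∘ s23 σ
  snd_star : ∀ a b, (σ (star b a, b)).2 = a
  star_snd : ∀ a b, star b (σ (a, b)).2 = a
  dot_eq : ∀ a b, dot a b = (σ (star b a, b)).1

/-- The identities of Rump's q-cycle sets. They say precisely that the boundaries `d_i` satisfy
`d_i d_j = d_{j-1} d_i` for `i < j` when the coefficients are trivial: `u` and `v` are the letters
erased, and `a` stands to the left of, between, or to the right of them. -/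
structure IsQCycle (star dot : X → X → X) : Prop where
  star_star : ∀ u v a, star (star v u) (star v a) = star (dot u v) (star u a)
  dot_star : ∀ u v a, dot (star v u) (star v a) = star (dot u v) (dot u a)
  dot_dot : ∀ u v a, dot (star v u) (dot v a) = dot (dot u v) (dot u a)

namespace IsLeftNondegenerateBraided

variable {σ : X × X → X × X} {star dot tri : X → X → X}

theorem star_star (h : IsLeftNondegenerateBraided σ star dot) (u v a : X) :
    star (star v u) (star v a) = star (dot u v) (star u a) := by
  have third := congrArg (·.2.2)
    (congrFun h.yangBaxter (star (star v u) (star v a), star v u, v))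
  simp only [s12, s23, Function.comp_apply, h.snd_star, ← h.dot_eq] at third
  conv_rhs => rw [third, h.star_snd, h.star_snd]

theorem snd_star_star_dot (h : IsLeftNondegenerateBraided σ star dot) (u v a : X) :
    (σ (star (star v u) (star v a), dot u v)).2 = star u a := by
  rw [h.star_star, h.snd_star]

theorem dot_star (h : IsLeftNondegenerateBraided σ star dot) (u v a : X) :
    dot (star v u) (star v a) = star (dot u v) (dot u a) := by
  have second := congrArg (·.2.1)
    (congrFun h.yangBaxter (star (star v a) (star v u), star v a, v))
  simp only [s12, s23, Function.comp_apply, h.snd_star, ← h.dot_eq, h.snd_star_star_dot]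
    at second
  rw [← second, h.star_snd]

theorem dot_dot (h : IsLeftNondegenerateBraided σ star dot) (u v a : X) :
    dot (star v u) (dot v a) = dot (dot u v) (dot u a) := by
  have first := congrArg (·.1)
    (congrFun h.yangBaxter (star (star a v) (star a u), star a v, a))
  simp only [s12, s23, Function.comp_apply, h.snd_star, ← h.dot_eq] at first
  rw [h.dot_eq (star v u), ← h.star_star, ← first, h.dot_eq (dot u v), ← h.dot_star]

theorem isQCycle (h : IsLeftNondegenerateBraided σ star dot) : IsQCycle star dot :=
  ⟨h.star_star, h.dot_star, h.dot_dot⟩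

theorem star_tri (h : IsLeftNondegenerateBraided σ star dot)
    (htri : ∀ a b, tri a b = (σ (dot b a, b)).2) (a b : X) : star b (tri a b) = dot b a := by
  rw [htri, h.star_snd]

theorem star_tri_distrib (h : IsLeftNondegenerateBraided σ star dot)
    (htri : ∀ a b, tri a b = (σ (dot b a, b)).2) (z a b : X) :
    star z (tri a b) = tri (star z a) (star z b) := by
  have image : star (star z b) (star z (tri a b)) = dot (star z b) (star z a) := by
    rw [h.star_star, h.star_tri htri, h.dot_star]
  rw [htri (star z a), ← image, h.snd_star]

end IsLeftNondegenerateBraided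

/-- The map `t(a) = a · a`. -/
def square (dot : X → X → X) (a : X) : X :=
  dot a a

namespace IsQCycle

variable {star dot : X → X → X}

theorem square_star_square (h : IsQCycle star dot) (hRI : ∀ a, dot a a = star a a) (u v : X) :
    square dot (star (square dot v) (star v u))
      = star (square dot (dot u v)) (square dot (star v u)) := by
  simp only [square]
  rw [hRI, h.star_star, h.dot_dot, ← hRI (star v u)]

theorem square_dot_square (h : IsQCycle star dot) (hRI : ∀ a, dot a a = star a a) (u v : X) :
    square dot (dot (square dot u) (dot u v))
      = dot (square dot (star v u)) (square dot (dot u v)) := by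
  simp only [square]
  rw [← h.dot_dot, hRI u, ← h.star_star, ← hRI (star v u)]

end IsQCycle

/-- `χ₁(x :: L)`, the letter left when all letters of `L` are erased from `x :: L` by the
boundaries `d_i`, starting from the last one. -/
def chiHead (star : X → X → X) : List X → X → X
  | [], x => x
  | y :: L, x => star (chiHead star L y) (chiHead star L x)

/-- `χ_i` at the word `A ++ u :: B` with `i = A.length + 1`, defined without the guitar map: the
letter left of `u` when all letters of `A` and `B` are erased by the boundaries `d_i`. -/
def chi (star dot : X → X → X) : List X → X → List X → X
  | [], u, B => chiHead star B u
  | a :: A, u, B => dot (chiHead star (A ++ B) a) (chi star dot A u B)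

namespace IsQCycle

variable {star dot : X → X → X}

theorem chiHead_insert (h : IsQCycle star dot) (v : X) (C : List X) (u : X) :
    ∀ B, chiHead star (B ++ v :: C) u = star (chi star dot B v C) (chiHead star (B ++ C) u)
  | [] => rfl
  | b :: B => by
    simp only [List.cons_append, chiHead, chi, h.chiHead_insert v C _ B, h.star_star]

theorem chi_insert_right (h : IsQCycle star dot) (u : X) (B : List X) (v : X) (C : List X) :
    ∀ A, chi star dot A u (B ++ v :: C)
      = star (chi star dot (A ++ B) v C) (chi star dot A u (B ++ C))
  | [] => h.chiHead_insert v C u B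
  | a :: A => by
    simp only [List.cons_append, chi, ← List.append_assoc, h.chiHead_insert, h.dot_star,
      h.chi_insert_right u B v C A]

theorem chi_insert_left (h : IsQCycle star dot) (u : X) (B : List X) (v : X) (C : List X) :
    ∀ A, chi star dot (A ++ u :: B) v C
      = dot (chi star dot A u (B ++ C)) (chi star dot (A ++ B) v C)
  | [] => rfl
  | a :: A => by
    simp only [List.cons_append, chi, List.append_assoc, h.chiHead_insert, h.dot_dot,
      h.chi_insert_left u B v C A]

theorem chi_double_left (h : IsQCycle star dot) (A : List X) (u : X) (C : List X) :
    chi star dot (A ++ [u]) u C = square dot (chi star dot A u C) := by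
  simpa [square] using h.chi_insert_left u [] u C A

theorem chi_double_right (h : IsQCycle star dot) (hRI : ∀ a, dot a a = star a a)
    (A : List X) (u : X) (C : List X) :
    chi star dot A u (u :: C) = square dot (chi star dot A u C) := by
  simpa [square, hRI] using h.chi_insert_right u [] u C A

theorem chiHead_map_dot_dot (h : IsQCycle star dot) (w x : X) :
    ∀ C, chiHead star (C.map (dot w)) (dot w x) = dot (chiHead star C w) (chiHead star C x)
  | [] => rfl
  | c :: C => by
    simp only [List.map_cons, chiHead, h.chiHead_map_dot_dot w _ C, h.dot_star]

theorem chiHead_map_dot_star (h : IsQCycle star dot) (w x : X) :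
    ∀ C, chiHead star (C.map (dot w)) (star w x) = chiHead star (w :: C) x
  | [] => rfl
  | c :: C => by
    simp only [List.map_cons, chiHead, h.chiHead_map_dot_star w x C, h.chiHead_map_dot_dot w c C,
      h.star_star]

theorem chiHead_face (h : IsQCycle star dot) (w : X) (C : List X) (x : X) :
    ∀ B, chiHead star (B.map (star w) ++ C.map (dot w)) (star w x) = chiHead star (B ++ w :: C) x
  | [] => h.chiHead_map_dot_star w x C
  | b :: B => by
    simp only [List.map_cons, List.cons_append, chiHead, h.chiHead_face w C _ B]

theorem chi_face_right (h : IsQCycle star dot) (u : X) (B : List X) (w : X) (C : List X) :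
    ∀ A, chi star dot (A.map (star w)) (star w u) (B.map (star w) ++ C.map (dot w))
      = chi star dot A u (B ++ w :: C)
  | [] => h.chiHead_face w C u B
  | a :: A => by
    simp only [List.map_cons, chi, ← List.append_assoc, ← List.map_append, h.chiHead_face,
      h.chi_face_right u B w C A]

theorem chi_map_dot (h : IsQCycle star dot) (w u : X) (C : List X) :
    ∀ B, chi star dot (B.map (dot w)) (dot w u) (C.map (dot w)) = chi star dot (w :: B) u C
  | [] => h.chiHead_map_dot_dot w u C
  | b :: B => by
    simp only [List.map_cons, List.cons_append, chi, chiHead, ← List.map_append,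
      h.chiHead_map_dot_dot, h.chi_map_dot w u C B, h.dot_dot]

theorem chi_face_left (h : IsQCycle star dot) (w : X) (B : List X) (u : X) (C : List X) :
    ∀ A, chi star dot (A.map (star w) ++ B.map (dot w)) (dot w u) (C.map (dot w))
      = chi star dot (A ++ w :: B) u C
  | [] => h.chi_map_dot w u C B
  | a :: A => by
    simp only [List.map_cons, List.cons_append, chi, List.append_assoc, ← List.map_append,
      h.chiHead_face, h.chi_face_left w B u C A]

end IsQCycle

section Guitar

variable {σ : X × X → X × X} {star dot tri : X → X → X} {Jinv : List X → List X}

/-- The inverse of the guitar map, in terms of `chiHead`. -/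
def guitarInv (star : X → X → X) : List X → List X
  | [] => []
  | y :: L => chiHead star L y :: guitarInv star L

theorem foldl_guitarInv_chiHead (hstar : ∀ a b, (σ (star b a, b)).2 = a) (y : X) :
    ∀ L, (guitarInv star L).foldl (fun a b => (σ (a, b)).2) (chiHead star L y) = y
  | [] => rfl
  | z :: L => by
    simp only [guitarInv, chiHead, List.foldl_cons, hstar, foldl_guitarInv_chiHead hstar y L]

theorem guitar_guitarInv (hstar : ∀ a b, (σ (star b a, b)).2 = a) :
    ∀ L, guitar σ (guitarInv star L) = L
  | [] => rfl
  | y :: L => by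
    simp only [guitarInv, guitar, foldl_guitarInv_chiHead hstar, guitar_guitarInv hstar L]

theorem chiHead_tri (h : IsLeftNondegenerateBraided σ star dot)
    (htri : ∀ a b, tri a b = (σ (dot b a, b)).2) (a b : X) :
    ∀ L, chiHead star L (tri a b) = tri (chiHead star L a) (chiHead star L b)
  | [] => rfl
  | y :: L => by simp only [chiHead, chiHead_tri h htri a b L, h.star_tri_distrib htri]

theorem chiHead_foldr_tri (h : IsLeftNondegenerateBraided σ star dot)
    (htri : ∀ a b, tri a b = (σ (dot b a, b)).2) (u : X) (B : List X) :
    ∀ A, chiHead star (A ++ B) (A.foldr (fun a x => tri x a) u) = chi star dot A u B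
  | [] => rfl
  | a :: A => by
    rw [List.cons_append, List.foldr_cons, chiHead, chi, chiHead_tri h htri,
      h.star_tri htri, chiHead_foldr_tri h htri u B A]

/-- The map `chiL tri Jinv`, which marks a letter by its index, agrees with `chi star dot`. -/
def ComputesChi (star dot tri : X → X → X) (Jinv : List X → List X) : Prop :=
  ∀ A u B, chiL tri Jinv (A.length + 1) (A ++ u :: B) = some (chi star dot A u B)

theorem IsLeftNondegenerateBraided.computesChi (h : IsLeftNondegenerateBraided σ star dot)
    (htri : ∀ a b, tri a b = (σ (dot b a, b)).2) (hJ : ∀ l, Jinv (guitar σ l) = l) :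
    ComputesChi star dot tri Jinv := by
  intro A u B
  have Jinv_eq (L : List X) : Jinv L = guitarInv star L := by
    rw [← hJ (guitarInv star L), guitar_guitarInv h.snd_star]
  simp [chiL, Jinv_eq, guitarInv, chiHead_foldr_tri h htri, List.drop_append,
    List.drop_eq_nil_of_le]

end Guitar

section Modules

/-- A right module over `(X, σ)` on which every `a : X` acts bijectively, with inverse
`actMinv · a`; the module axiom is written in terms of `⊛` and `·`. -/
structure IsSolidModule (star dot : X → X → X) (actM actMinv : M → X → M) : Prop where
  act_act : ∀ m u v, actM (actM m (star v u)) v = actM (actM m (dot u v)) u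
  act_inv : ∀ m a, actM (actMinv m a) a = m
  inv_act : ∀ m a, actMinv (actM m a) a = m

namespace IsSolidModule

variable {star dot : X → X → X} {actM actMinv : M → X → M}

theorem eq_inv_iff (h : IsSolidModule star dot actM actMinv) {m m' : M} {a : X} :
    m = actMinv m' a ↔ actM m a = m' :=
  ⟨fun e => e ▸ h.act_inv m' a, fun e => e ▸ (h.inv_act m a).symm⟩

theorem inv_inv (h : IsSolidModule star dot actM actMinv) (m : M) (u v : X) :
    actMinv (actMinv m v) (star v u) = actMinv (actMinv m u) (dot u v) := by
  rw [h.eq_inv_iff, h.eq_inv_iff, ← h.act_act, h.act_inv, h.act_inv]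

theorem act_inv_square_left (h : IsSolidModule star dot actM actMinv) (hq : IsQCycle star dot)
    (m : M) (u v : X) :
    actM (actMinv m (square dot (dot u v))) (star (square dot v) (star v u))
      = actMinv (actM m (star v u)) (square dot v) := by
  rw [h.eq_inv_iff, h.act_act, square, square, hq.dot_dot, h.act_inv]

theorem act_inv_square_right (h : IsSolidModule star dot actM actMinv) (hq : IsQCycle star dot)
    (hRI : ∀ a, dot a a = star a a) (m : M) (u v : X) :
    actM (actMinv m (square dot (star v u))) (dot (square dot u) (dot u v))
      = actMinv (actM m (dot u v)) (square dot u) := by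
  rw [h.eq_inv_iff, ← h.act_act, square, square, hRI u, ← hq.star_star, hRI (star v u), h.act_inv]

theorem inv_inv_square (h : IsSolidModule star dot actM actMinv) (hq : IsQCycle star dot)
    (hRI : ∀ a, dot a a = star a a) (m : M) (u v : X) :
    actMinv (actMinv m (square dot (dot u v))) (square dot (star (square dot v) (star v u)))
      = actMinv (actMinv m (square dot (star v u)))
          (square dot (dot (square dot u) (dot u v))) := by
  rw [hq.square_star_square hRI, hq.square_dot_square hRI, h.inv_inv]

end IsSolidModule

end Modules

end Algebra

/-! ### The cubical identities -/

/-- Semi-strong skew cubical sets, with the levels `C_k` glued to one type `I` graded by `len`: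
`d true i` is the face `d_i⁺`, `d false i` is `d_i⁻`, and `s i` is the degeneracy `s_i`. Indices
start at `1`, and nothing is required outside the range where the maps are meaningful. -/
structure IsSemiStrongSkewCubical {I : Type*} (len : I → ℕ) (d : Bool → ℕ → I → I)
    (s : ℕ → I → I) : Prop where
  len_face : ∀ ε i p, 1 ≤ i → i ≤ len p → len (d ε i p) = len p - 1
  len_degen : ∀ i p, 1 ≤ i → i ≤ len p → len (s i p) = len p + 1
  face_face : ∀ ε ζ i j p, 1 ≤ i → i < j → j ≤ len p → d ε i (d ζ j p) = d ζ (j - 1) (d ε i p)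
  face_degen_of_lt : ∀ ε i j p, 1 ≤ i → i < j → j ≤ len p →
    d ε i (s j p) = s (j - 1) (d ε i p)
  face_degen_of_gt : ∀ ε i j p, 1 ≤ j → j + 1 < i → i ≤ len p + 1 →
    d ε i (s j p) = s j (d ε (i - 1) p)
  neg_face_degen : ∀ i p, 1 ≤ i → i ≤ len p → d false i (s i p) = d false (i + 1) (s i p)
  degen_degen : ∀ i j p, 1 ≤ i → i ≤ j → j ≤ len p → s i (s j p) = s (j + 1) (s i p)
  pos_face_degen : ∀ i p, 1 ≤ i → i ≤ len p → d true i (s i p) = p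
  pos_face_succ_degen : ∀ i p, 1 ≤ i → i ≤ len p → d true (i + 1) (s i p) = p

section BraidedChains

variable {X M N : Type*} {star dot tri : X → X → X} {Jinv : List X → List X}
  {actM actMinv : M → X → M} {actN : X → N → N}

theorem exists_eq_append_cons {L : List X} {i : ℕ} (hi : 1 ≤ i) (hiL : i ≤ L.length) :
    ∃ A u B, L = A ++ u :: B ∧ i = A.length + 1 := by
  have hlt : i - 1 < L.length := by omega
  exact ⟨L.take (i - 1), L[i - 1], L.drop (i - 1 + 1), by simp, by grind⟩

theorem exists_eq_append_cons_append_cons {L : List X} {i j : ℕ} (hi : 1 ≤ i) (hij : i < j)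
    (hjL : j ≤ L.length) :
    ∃ A u B v C, L = A ++ u :: (B ++ v :: C) ∧ i = A.length + 1 ∧
      j = A.length + B.length + 2 := by
  obtain ⟨A, u, R, rfl, hA⟩ := exists_eq_append_cons hi (hij.le.trans hjL)
  obtain ⟨B, v, C, rfl, hB⟩ := exists_eq_append_cons (L := R) (i := j - i) (by omega) (by grind)
  exact ⟨A, u, B, v, C, rfl, hA, by omega⟩

theorem dCyc_eq (A : List X) (u : X) (B : List X) {L : List X} {i : ℕ} (m : M) (n : N)
    (hL : L = A ++ u :: B) (hi : i = A.length + 1) :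
    dCyc star dot actN i (m, L, n) = (m, A.map (star u) ++ B.map (dot u), actN u n) := by
  subst hL hi
  simp [dCyc, List.drop_append, List.drop_eq_nil_of_le]

namespace ComputesChi

theorem dPrime_eq (hχ : ComputesChi star dot tri Jinv) (A : List X) (u : X) (B : List X)
    {L : List X} {i : ℕ} (m : M) (n : N) (hL : L = A ++ u :: B) (hi : i = A.length + 1) :
    dPrime tri Jinv actM i (m, L, n) = (actM m (chi star dot A u B), A ++ B, n) := by
  subst hL hi
  simp [dPrime, hχ A u B, List.eraseIdx_append_of_length_le]

theorem sCyc_eq {tmap : X → X} (hχ : ComputesChi star dot tri Jinv) (A : List X) (u : X)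
    (B : List X) {L : List X} {i : ℕ} (m : M) (n : N) (hL : L = A ++ u :: B)
    (hi : i = A.length + 1) :
    sCyc tri Jinv tmap actMinv i (m, L, n)
      = (actMinv m (tmap (chi star dot A u B)), A ++ u :: u :: B, n) := by
  subst hL hi
  simp [sCyc, hχ A u B, List.drop_append, List.take_append, List.drop_eq_nil_of_le,
    List.take_of_length_le]

end ComputesChi

theorem length_dCyc (i : ℕ) (p : M × List X × N) (hi : 1 ≤ i) (hip : i ≤ p.2.1.length) :
    (dCyc star dot actN i p).2.1.length = p.2.1.length - 1 := by
  obtain ⟨m, L, n⟩ := p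
  obtain ⟨A, u, B, rfl, rfl⟩ := exists_eq_append_cons hi hip
  rw [dCyc_eq A u B m n rfl rfl]
  simp

theorem dCyc_dCyc (hq : IsQCycle star dot)
    (hN : ∀ u v n, actN (star v u) (actN v n) = actN (dot u v) (actN u n))
    (i j : ℕ) (p : M × List X × N) (hi : 1 ≤ i) (hij : i < j) (hjp : j ≤ p.2.1.length) :
    dCyc star dot actN i (dCyc star dot actN j p)
      = dCyc star dot actN (j - 1) (dCyc star dot actN i p) := by
  obtain ⟨m, L, n⟩ := p
  obtain ⟨A, u, B, v, C, rfl, rfl, rfl⟩ := exists_eq_append_cons_append_cons hi hij hjp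
  rw [dCyc_eq (A ++ u :: B) v C m n (by simp) (by grind),
    dCyc_eq (A.map (star v)) (star v u) (B.map (star v) ++ C.map (dot v)) m _
      (by simp) (by simp),
    dCyc_eq A u (B ++ v :: C) m n rfl rfl,
    dCyc_eq (A.map (star u) ++ B.map (dot u)) (dot u v) (C.map (dot u)) m _
      (by simp) (by grind), hN]
  simp only [List.map_append, List.map_map, Function.comp_def, hq.star_star u v, hq.dot_star u v,
    hq.dot_dot u v, List.append_assoc]

namespace ComputesChi

theorem length_dPrime (hχ : ComputesChi star dot tri Jinv)
    (i : ℕ) (p : M × List X × N) (hi : 1 ≤ i) (hip : i ≤ p.2.1.length) :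
    (dPrime tri Jinv actM i p).2.1.length = p.2.1.length - 1 := by
  obtain ⟨m, L, n⟩ := p
  obtain ⟨A, u, B, rfl, rfl⟩ := exists_eq_append_cons hi hip
  rw [hχ.dPrime_eq A u B m n rfl rfl]
  simp

theorem length_sCyc {tmap : X → X} (hχ : ComputesChi star dot tri Jinv)
    (i : ℕ) (p : M × List X × N) (hi : 1 ≤ i) (hip : i ≤ p.2.1.length) :
    (sCyc tri Jinv tmap actMinv i p).2.1.length = p.2.1.length + 1 := by
  obtain ⟨m, L, n⟩ := p
  obtain ⟨A, u, B, rfl, rfl⟩ := exists_eq_append_cons hi hip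
  rw [hχ.sCyc_eq A u B m n rfl rfl]
  grind

theorem dPrime_dPrime (hχ : ComputesChi star dot tri Jinv) (hq : IsQCycle star dot)
    (hM : ∀ m u v, actM (actM m (star v u)) v = actM (actM m (dot u v)) u)
    (i j : ℕ) (p : M × List X × N) (hi : 1 ≤ i) (hij : i < j) (hjp : j ≤ p.2.1.length) :
    dPrime tri Jinv actM i (dPrime tri Jinv actM j p)
      = dPrime tri Jinv actM (j - 1) (dPrime tri Jinv actM i p) := by
  obtain ⟨m, L, n⟩ := p
  obtain ⟨A, u, B, v, C, rfl, rfl, rfl⟩ := exists_eq_append_cons_append_cons hi hij hjp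
  rw [hχ.dPrime_eq (A ++ u :: B) v C m n (by simp) (by grind),
    hχ.dPrime_eq A u (B ++ C) _ n (by simp) rfl,
    hχ.dPrime_eq A u (B ++ v :: C) m n rfl rfl,
    hχ.dPrime_eq (A ++ B) v C _ n (by simp) (by grind),
    hq.chi_insert_left, hq.chi_insert_right, hM, List.append_assoc]

theorem dPrime_dCyc (hχ : ComputesChi star dot tri Jinv) (hq : IsQCycle star dot)
    (i j : ℕ) (p : M × List X × N) (hi : 1 ≤ i) (hij : i < j) (hjp : j ≤ p.2.1.length) :
    dPrime tri Jinv actM i (dCyc star dot actN j p)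
      = dCyc star dot actN (j - 1) (dPrime tri Jinv actM i p) := by
  obtain ⟨m, L, n⟩ := p
  obtain ⟨A, u, B, v, C, rfl, rfl, rfl⟩ := exists_eq_append_cons_append_cons hi hij hjp
  rw [dCyc_eq (A ++ u :: B) v C m n (by simp) (by grind),
    hχ.dPrime_eq (A.map (star v)) (star v u) (B.map (star v) ++ C.map (dot v)) m _
      (by simp) (by simp),
    hχ.dPrime_eq A u (B ++ v :: C) m n rfl rfl,
    dCyc_eq (A ++ B) v C _ n (by simp) (by grind), hq.chi_face_right]
  simp

theorem dCyc_dPrime (hχ : ComputesChi star dot tri Jinv) (hq : IsQCycle star dot)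
    (i j : ℕ) (p : M × List X × N) (hi : 1 ≤ i) (hij : i < j) (hjp : j ≤ p.2.1.length) :
    dCyc star dot actN i (dPrime tri Jinv actM j p)
      = dPrime tri Jinv actM (j - 1) (dCyc star dot actN i p) := by
  obtain ⟨m, L, n⟩ := p
  obtain ⟨A, u, B, v, C, rfl, rfl, rfl⟩ := exists_eq_append_cons_append_cons hi hij hjp
  rw [hχ.dPrime_eq (A ++ u :: B) v C m n (by simp) (by grind),
    dCyc_eq A u (B ++ C) _ n (by simp) rfl,
    dCyc_eq A u (B ++ v :: C) m n rfl rfl,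
    hχ.dPrime_eq (A.map (star u) ++ B.map (dot u)) (dot u v) (C.map (dot u)) m _
      (by simp) (by grind), hq.chi_face_left]
  simp

theorem dPrime_sCyc_of_lt (hχ : ComputesChi star dot tri Jinv) (hq : IsQCycle star dot)
    (hRI : ∀ a, dot a a = star a a) (hM : IsSolidModule star dot actM actMinv)
    (i j : ℕ) (p : M × List X × N) (hi : 1 ≤ i) (hij : i < j) (hjp : j ≤ p.2.1.length) :
    dPrime tri Jinv actM i (sCyc tri Jinv (square dot) actMinv j p)
      = sCyc tri Jinv (square dot) actMinv (j - 1) (dPrime tri Jinv actM i p) := by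
  obtain ⟨m, L, n⟩ := p
  obtain ⟨A, u, B, v, C, rfl, rfl, rfl⟩ := exists_eq_append_cons_append_cons hi hij hjp
  rw [hχ.sCyc_eq (A ++ u :: B) v C m n (by simp) (by grind),
    hχ.dPrime_eq A u (B ++ v :: v :: C) _ n (by simp) rfl,
    hχ.dPrime_eq A u (B ++ v :: C) m n rfl rfl,
    hχ.sCyc_eq (A ++ B) v C _ n (by simp) (by grind),
    hq.chi_insert_left, hq.chi_insert_right, hq.chi_insert_right, hq.chi_double_right hRI,
    hM.act_inv_square_left hq, List.append_assoc]

theorem dCyc_sCyc_of_lt (hχ : ComputesChi star dot tri Jinv) (hq : IsQCycle star dot)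
    {tmap : X → X}
    (i j : ℕ) (p : M × List X × N) (hi : 1 ≤ i) (hij : i < j) (hjp : j ≤ p.2.1.length) :
    dCyc star dot actN i (sCyc tri Jinv tmap actMinv j p)
      = sCyc tri Jinv tmap actMinv (j - 1) (dCyc star dot actN i p) := by
  obtain ⟨m, L, n⟩ := p
  obtain ⟨A, u, B, v, C, rfl, rfl, rfl⟩ := exists_eq_append_cons_append_cons hi hij hjp
  rw [hχ.sCyc_eq (A ++ u :: B) v C m n (by simp) (by grind),
    dCyc_eq A u (B ++ v :: v :: C) _ n (by simp) rfl,
    dCyc_eq A u (B ++ v :: C) m n rfl rfl,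
    hχ.sCyc_eq (A.map (star u) ++ B.map (dot u)) (dot u v) (C.map (dot u)) m _
      (by simp) (by grind), hq.chi_face_left]
  simp

theorem dPrime_sCyc_of_gt (hχ : ComputesChi star dot tri Jinv) (hq : IsQCycle star dot)
    (hRI : ∀ a, dot a a = star a a) (hM : IsSolidModule star dot actM actMinv)
    (i j : ℕ) (p : M × List X × N) (hj : 1 ≤ j) (hji : j + 1 < i)
    (hip : i ≤ p.2.1.length + 1) :
    dPrime tri Jinv actM i (sCyc tri Jinv (square dot) actMinv j p)
      = sCyc tri Jinv (square dot) actMinv j (dPrime tri Jinv actM (i - 1) p) := by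
  obtain ⟨m, L, n⟩ := p
  obtain ⟨i, rfl⟩ := Nat.exists_eq_add_of_lt hji
  obtain ⟨A, u, B, v, C, rfl, rfl, hi⟩ :=
    exists_eq_append_cons_append_cons (L := L) (j := j + i + 1) hj (by omega) (by grind)
  rw [hχ.sCyc_eq A u (B ++ v :: C) m n rfl rfl,
    hχ.dPrime_eq (A ++ u :: u :: B) v C _ n (by simp) (by grind),
    hχ.dPrime_eq (A ++ u :: B) v C m n (by simp) (by grind),
    hχ.sCyc_eq A u (B ++ C) _ n (by simp) rfl,
    hq.chi_insert_right, hq.chi_insert_left, hq.chi_insert_left, List.cons_append,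
    hq.chi_double_right hRI, hM.act_inv_square_right hq hRI]
  simp

theorem dCyc_sCyc_of_gt (hχ : ComputesChi star dot tri Jinv) (hq : IsQCycle star dot)
    {tmap : X → X} (i j : ℕ) (p : M × List X × N) (hj : 1 ≤ j) (hji : j + 1 < i)
    (hip : i ≤ p.2.1.length + 1) :
    dCyc star dot actN i (sCyc tri Jinv tmap actMinv j p)
      = sCyc tri Jinv tmap actMinv j (dCyc star dot actN (i - 1) p) := by
  obtain ⟨m, L, n⟩ := p
  obtain ⟨i, rfl⟩ := Nat.exists_eq_add_of_lt hji
  obtain ⟨A, u, B, v, C, rfl, rfl, hi⟩ :=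
    exists_eq_append_cons_append_cons (L := L) (j := j + i + 1) hj (by omega) (by grind)
  rw [hχ.sCyc_eq A u (B ++ v :: C) m n rfl rfl,
    dCyc_eq (A ++ u :: u :: B) v C _ n (by simp) (by grind),
    dCyc_eq (A ++ u :: B) v C m n (by simp) (by grind),
    hχ.sCyc_eq (A.map (star v)) (star v u) (B.map (star v) ++ C.map (dot v)) m _
      (by simp) (by simp), hq.chi_face_right]
  simp

theorem dCyc_sCyc_self (hχ : ComputesChi star dot tri Jinv) (hRI : ∀ a, dot a a = star a a)
    {tmap : X → X} (i : ℕ) (p : M × List X × N) (hi : 1 ≤ i) (hip : i ≤ p.2.1.length) :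
    dCyc star dot actN i (sCyc tri Jinv tmap actMinv i p)
      = dCyc star dot actN (i + 1) (sCyc tri Jinv tmap actMinv i p) := by
  obtain ⟨m, L, n⟩ := p
  obtain ⟨A, u, B, rfl, rfl⟩ := exists_eq_append_cons hi hip
  rw [hχ.sCyc_eq A u B m n rfl rfl, dCyc_eq A u (u :: B) _ n rfl rfl,
    dCyc_eq (A ++ [u]) u B _ n (by simp) (by simp)]
  simp [hRI]

theorem sCyc_sCyc_self (hχ : ComputesChi star dot tri Jinv) (hq : IsQCycle star dot)
    (hRI : ∀ a, dot a a = star a a) (i : ℕ) (p : M × List X × N) (hi : 1 ≤ i)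
    (hip : i ≤ p.2.1.length) :
    sCyc tri Jinv (square dot) actMinv i (sCyc tri Jinv (square dot) actMinv i p)
      = sCyc tri Jinv (square dot) actMinv (i + 1) (sCyc tri Jinv (square dot) actMinv i p) := by
  obtain ⟨m, L, n⟩ := p
  obtain ⟨A, u, B, rfl, rfl⟩ := exists_eq_append_cons hi hip
  rw [hχ.sCyc_eq A u B m n rfl rfl, hχ.sCyc_eq A u (u :: B) _ n rfl rfl,
    hχ.sCyc_eq (A ++ [u]) u B _ n (by simp) (by simp), hq.chi_double_right hRI,
    hq.chi_double_left]
  simp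

theorem sCyc_sCyc (hχ : ComputesChi star dot tri Jinv) (hq : IsQCycle star dot)
    (hRI : ∀ a, dot a a = star a a) (hM : IsSolidModule star dot actM actMinv)
    (i j : ℕ) (p : M × List X × N) (hi : 1 ≤ i) (hij : i ≤ j) (hjp : j ≤ p.2.1.length) :
    sCyc tri Jinv (square dot) actMinv i (sCyc tri Jinv (square dot) actMinv j p)
      = sCyc tri Jinv (square dot) actMinv (j + 1) (sCyc tri Jinv (square dot) actMinv i p) := by
  rcases hij.eq_or_lt with rfl | hlt
  · exact hχ.sCyc_sCyc_self hq hRI i p hi hjp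
  obtain ⟨m, L, n⟩ := p
  obtain ⟨A, u, B, v, C, rfl, rfl, rfl⟩ := exists_eq_append_cons_append_cons hi hlt hjp
  rw [hχ.sCyc_eq (A ++ u :: B) v C m n (by simp) (by grind),
    hχ.sCyc_eq A u (B ++ v :: v :: C) _ n (by simp) rfl,
    hχ.sCyc_eq A u (B ++ v :: C) m n rfl rfl,
    hχ.sCyc_eq (A ++ u :: u :: B) v C _ n (by simp) (by grind),
    hq.chi_insert_left u B, hq.chi_insert_right u B v (v :: C), hq.chi_insert_right u B v C,
    hq.chi_insert_left u (u :: B), hq.chi_insert_left u B, List.cons_append,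
    hq.chi_double_right hRI, hq.chi_double_right hRI, hM.inv_inv_square hq hRI]
  simp

theorem dPrime_sCyc_self (hχ : ComputesChi star dot tri Jinv) (hq : IsQCycle star dot)
    (hRI : ∀ a, dot a a = star a a) (hM : ∀ m a, actM (actMinv m a) a = m)
    (i : ℕ) (p : M × List X × N) (hi : 1 ≤ i) (hip : i ≤ p.2.1.length) :
    dPrime tri Jinv actM i (sCyc tri Jinv (square dot) actMinv i p) = p := by
  obtain ⟨m, L, n⟩ := p
  obtain ⟨A, u, B, rfl, rfl⟩ := exists_eq_append_cons hi hip
  rw [hχ.sCyc_eq A u B m n rfl rfl, hχ.dPrime_eq A u (u :: B) _ n rfl rfl,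
    hq.chi_double_right hRI, hM]

theorem dPrime_succ_sCyc (hχ : ComputesChi star dot tri Jinv) (hq : IsQCycle star dot)
    (hM : ∀ m a, actM (actMinv m a) a = m)
    (i : ℕ) (p : M × List X × N) (hi : 1 ≤ i) (hip : i ≤ p.2.1.length) :
    dPrime tri Jinv actM (i + 1) (sCyc tri Jinv (square dot) actMinv i p) = p := by
  obtain ⟨m, L, n⟩ := p
  obtain ⟨A, u, B, rfl, rfl⟩ := exists_eq_append_cons hi hip
  rw [hχ.sCyc_eq A u B m n rfl rfl, hχ.dPrime_eq (A ++ [u]) u B _ n (by simp) (by simp),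
    hq.chi_double_left, hM, List.append_assoc, List.singleton_append]

theorem isSemiStrongSkewCubical (hχ : ComputesChi star dot tri Jinv) (hq : IsQCycle star dot)
    (hRI : ∀ a, dot a a = star a a) (hM : IsSolidModule star dot actM actMinv)
    (hN : ∀ u v n, actN (star v u) (actN v n) = actN (dot u v) (actN u n)) :
    IsSemiStrongSkewCubical (fun p : M × List X × N => p.2.1.length)
      (fun ε => cond ε (dPrime tri Jinv actM) (dCyc star dot actN))
      (sCyc tri Jinv (square dot) actMinv) where
  len_face := Bool.forall_bool.2 ⟨length_dCyc, hχ.length_dPrime⟩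
  len_degen := hχ.length_sCyc
  face_face := Bool.forall_bool.2
    ⟨Bool.forall_bool.2 ⟨dCyc_dCyc hq hN, hχ.dCyc_dPrime hq⟩,
      Bool.forall_bool.2 ⟨hχ.dPrime_dCyc hq, hχ.dPrime_dPrime hq hM.act_act⟩⟩
  face_degen_of_lt := Bool.forall_bool.2
    ⟨hχ.dCyc_sCyc_of_lt hq, hχ.dPrime_sCyc_of_lt hq hRI hM⟩
  face_degen_of_gt := Bool.forall_bool.2
    ⟨hχ.dCyc_sCyc_of_gt hq, hχ.dPrime_sCyc_of_gt hq hRI hM⟩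
  neg_face_degen := hχ.dCyc_sCyc_self hRI
  degen_degen := hχ.sCyc_sCyc hq hRI hM
  pos_face_degen := hχ.dPrime_sCyc_self hq hRI hM.act_inv
  pos_face_succ_degen := hχ.dPrime_succ_sCyc hq hM.act_inv

end ComputesChi

end BraidedChains

/-! ### Normalization of linearized skew cubical sets -/

section Linearization

variable {I A : Type*} [AddCommGroup A] {len : I → ℕ}

/-- The linear extension to `⊕_{c : I} A` of a map on basis elements. -/
noncomputable abbrev linearize (A : Type*) [AddCommGroup A] (f : I → I) :
    (I →₀ A) →ₗ[ℤ] (I →₀ A) :=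
  Finsupp.lmapDomain A ℤ f

theorem eqOn_levC {f g : (I →₀ A) →ₗ[ℤ] (I →₀ A)} {k : ℕ}
    (h : ∀ c, len c = k → ∀ a, f (Finsupp.single c a) = g (Finsupp.single c a))
    {x : I →₀ A} (hx : x ∈ levC len k) : f x = g x := by
  rw [← Finsupp.sum_single x, Finsupp.sum, map_sum, map_sum]
  exact Finset.sum_congr rfl fun c hc => h c ((Finsupp.mem_supported ℤ x).1 hx hc) _

theorem linearize_mem_levC {f : I → I} {k l : ℕ} (h : ∀ c, len c = k → len (f c) = l)
    {x : I →₀ A} (hx : x ∈ levC len k) : linearize A f x ∈ levC len l := by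
  classical
  refine (Finsupp.mem_supported ℤ _).2 fun c hc => ?_
  obtain ⟨b, hb, rfl⟩ := Finset.mem_image.1 (Finsupp.mapDomain_support hc)
  exact h b ((Finsupp.mem_supported ℤ x).1 hx hb)

theorem linearize_linearize_congr {f g f' g' : I → I} {k : ℕ}
    (h : ∀ c, len c = k → f (g c) = f' (g' c)) {x : I →₀ A} (hx : x ∈ levC len k) :
    linearize A f (linearize A g x) = linearize A f' (linearize A g' x) :=
  eqOn_levC (f := linearize A f ∘ₗ linearize A g) (g := linearize A f' ∘ₗ linearize A g')
    (fun c hc a => by simp [h c hc]) hx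

theorem linearize_linearize_eq_self {f g : I → I} {k : ℕ} (h : ∀ c, len c = k → f (g c) = c)
    {x : I →₀ A} (hx : x ∈ levC len k) : linearize A f (linearize A g x) = x :=
  eqOn_levC (f := linearize A f ∘ₗ linearize A g) (g := LinearMap.id)
    (fun c hc a => by simp [h c hc]) hx

/-- The alternating sum `∑_{i=1}^{k} (-1)^{i-1} d_i` of linearized faces. -/
noncomputable def alternatingFaceSum (A : Type*) [AddCommGroup A] (d : ℕ → I → I) (k : ℕ) :
    (I →₀ A) →ₗ[ℤ] (I →₀ A) :=
  ∑ i ∈ Finset.range k, (-1 : ℤ) ^ i • linearize A (d (i + 1))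

theorem bdryC_eq (dP dM : ℕ → I → I) (α β : ℤ) {k : ℕ} {x : I →₀ A} (hx : x ∈ levC len k) :
    bdryC len dP dM α β x
      = α • alternatingFaceSum A dP k x + β • alternatingFaceSum A dM k x := by
  refine eqOn_levC (g := α • alternatingFaceSum A dP k + β • alternatingFaceSum A dM k)
    (fun c hc a => ?_) hx
  simp only [bdryC, alternatingFaceSum, hc, Finsupp.lsum_single, LinearMap.add_apply,
    LinearMap.sum_apply, LinearMap.smul_apply, Finsupp.lsingle_apply, Finsupp.lmapDomain_apply,
    Finsupp.mapDomain_single, Finset.sum_add_distrib, Finset.smul_sum, mul_smul]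

theorem alternating_sum_mem_of_eq_succ {V : Type*} [AddCommGroup V] (S : Submodule ℤ V) {F : ℕ → V}
    {k r : ℕ} (hr : r + 1 < k) (heq : F r = F (r + 1))
    (hF : ∀ l < k, l ≠ r → l ≠ r + 1 → F l ∈ S) :
    ∑ l ∈ Finset.range k, (-1 : ℤ) ^ l • F l ∈ S := by
  have pair_sum : ∑ l ∈ {r, r + 1}, (-1 : ℤ) ^ l • F l = 0 := by
    rw [Finset.sum_pair (Nat.ne_of_lt r.lt_succ_self), heq, pow_succ, ← add_smul]
    simp
  have pair_subset : {r, r + 1} ⊆ Finset.range k := by grind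
  rw [← Finset.sum_sdiff pair_subset, pair_sum, add_zero]
  exact S.sum_mem fun l hl => S.smul_mem _ (hF l (by grind) (by grind) (by grind))

section Normalization

variable {s dP : ℕ → I → I}

theorem mem_degPart {k i : ℕ} (hi : 1 ≤ i) (hik : i < k) {z : I →₀ A}
    (hz : z ∈ levC len (k - 1)) : linearize A (s i) z ∈ degPart len s k :=
  Submodule.mem_iSup_of_mem i <| Submodule.mem_iSup_of_mem
    (Finset.mem_Icc.2 ⟨hi, Nat.le_sub_one_of_lt hik⟩) ⟨z, hz, rfl⟩

theorem degPart_le {k : ℕ} {S : Submodule ℤ (I →₀ A)}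
    (h : ∀ i, 1 ≤ i → i < k → ∀ z ∈ levC len (k - 1), linearize A (s i) z ∈ S) :
    degPart len s k ≤ S := by
  refine iSup₂_le fun i hi => ?_
  rw [Finset.mem_Icc] at hi
  rintro _ ⟨z, hz, rfl⟩
  exact h i hi.1 (by omega) z hz

theorem etaC_zero (x : I →₀ A) : etaC s dP 0 x = x := rfl

theorem etaC_one (x : I →₀ A) : etaC s dP 1 x = x := rfl

theorem etaC_add_two (n : ℕ) (x : I →₀ A) :
    etaC s dP (n + 2) x
      = etaC s dP (n + 1) (x - linearize A (s (n + 1)) (linearize A (dP (n + 2)) x)) := by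
  have comp_eq : Finsupp.mapDomain (fun c => s (n + 1) (dP (n + 2) c)) x
      = Finsupp.mapDomain (s (n + 1)) (Finsupp.mapDomain (dP (n + 2)) x) :=
    Finsupp.mapDomain_comp
  simp [etaC, List.range_succ, comp_eq]

theorem etaC_eq_self {x : I →₀ A} :
    ∀ n, (∀ j, 2 ≤ j → j ≤ n → linearize A (dP j) x = 0) → etaC s dP n x = x
  | 0, _ => rfl
  | 1, _ => rfl
  | n + 2, hx => by
    rw [etaC_add_two, hx (n + 2) (by omega) le_rfl, map_zero, sub_zero]
    exact etaC_eq_self (n + 1) fun j hj hjn => hx j hj (by omega)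

end Normalization

namespace IsSemiStrongSkewCubical

variable {d : Bool → ℕ → I → I} {s : ℕ → I → I} {k : ℕ}

theorem linearize_face_mem (H : IsSemiStrongSkewCubical len d s) (ε : Bool) {i : ℕ}
    (hi : 1 ≤ i) (hik : i ≤ k) {x : I →₀ A} (hx : x ∈ levC len k) :
    linearize A (d ε i) x ∈ levC len (k - 1) :=
  linearize_mem_levC (fun c hc => by rw [H.len_face ε i c hi (hc ▸ hik), hc]) hx

theorem linearize_degen_mem (H : IsSemiStrongSkewCubical len d s) {i : ℕ} (hi : 1 ≤ i)
    (hik : i < k) {x : I →₀ A} (hx : x ∈ levC len (k - 1)) :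
    linearize A (s i) x ∈ levC len k :=
  linearize_mem_levC (fun c hc => by rw [H.len_degen i c hi (by omega), hc]; omega) hx

theorem linearize_degen_face_mem (H : IsSemiStrongSkewCubical len d s) {n : ℕ}
    (hn : n + 2 ≤ k) {x : I →₀ A} (hx : x ∈ levC len k) :
    linearize A (s (n + 1)) (linearize A (d true (n + 2)) x) ∈ levC len k :=
  H.linearize_degen_mem (by omega) hn (H.linearize_face_mem true (by omega) hn hx)

theorem degPart_le_levC (H : IsSemiStrongSkewCubical len d s) (k : ℕ) :
    degPart (A := A) len s k ≤ levC len k :=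
  degPart_le fun _ hi hik _ hz => H.linearize_degen_mem hi hik hz

theorem sub_etaC_mem_degPart (H : IsSemiStrongSkewCubical len d s) :
    ∀ n ≤ k, ∀ x ∈ levC (A := A) len k, x - etaC s (d true) n x ∈ degPart len s k
  | 0, _, x, _ => by simp [etaC_zero]
  | 1, _, x, _ => by simp [etaC_one]
  | n + 2, hn, x, hx => by
    have degenerate : linearize A (s (n + 1)) (linearize A (d true (n + 2)) x)
        ∈ degPart len s k :=
      mem_degPart (by omega) hn (H.linearize_face_mem true (by omega) hn hx)
    have rest := H.sub_etaC_mem_degPart (n + 1) (by omega) _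
      (sub_mem hx (H.linearize_degen_face_mem hn hx))
    rw [etaC_add_two]
    convert add_mem rest degenerate using 1
    abel

theorem face_etaC_eq_zero (H : IsSemiStrongSkewCubical len d s) :
    ∀ n ≤ k, ∀ x ∈ levC (A := A) len k,
      (∀ j, 2 ≤ j → n < j → j ≤ k → linearize A (d true j) x = 0) →
      ∀ j, 2 ≤ j → j ≤ k → linearize A (d true j) (etaC s (d true) n x) = 0
  | 0, _, _, _, hd, j, hj, hjk => hd j hj (by omega) hjk
  | 1, _, _, _, hd, j, hj, hjk => hd j hj hj hjk
  | n + 2, hn, x, hx, hd, j, hj, hjk => by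
    rw [etaC_add_two]
    refine H.face_etaC_eq_zero (n + 1) (by omega) _
      (sub_mem hx (H.linearize_degen_face_mem hn hx)) (fun l _ hnl hlk => ?_) j hj hjk
    have face_mem := H.linearize_face_mem true (Nat.le_add_left 1 (n + 1)) hn hx
    rw [map_sub, sub_eq_zero]
    rcases Nat.eq_or_lt_of_le hnl with rfl | hlt
    · exact (linearize_linearize_eq_self
        (fun c hc => H.pos_face_succ_degen (n + 1) c (by omega) (by omega)) face_mem).symm
    · rw [linearize_linearize_congr
          (fun c hc => H.face_degen_of_gt true l (n + 1) c (by omega) hlt (by omega)) face_mem,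
        ← linearize_linearize_congr
          (fun c hc => H.face_face true true (n + 2) l c (by omega) hlt (by omega)) hx,
        hd l (by omega) hlt hlk, map_zero, map_zero]

theorem etaC_degen_eq_zero (H : IsSemiStrongSkewCubical len d s) :
    ∀ n ≤ k, ∀ i, 1 ≤ i → i < n → ∀ z ∈ levC (A := A) len (k - 1),
      etaC s (d true) n (linearize A (s i) z) = 0
  | 0, _, i, hi, hin, z, _ => by omega
  | 1, _, i, hi, hin, z, _ => by omega
  | n + 2, hn, i, hi, hin, z, hz => by
    rw [etaC_add_two]
    rcases Nat.eq_or_lt_of_le (Nat.le_of_lt_succ hin) with rfl | hlt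
    · rw [linearize_linearize_eq_self
        (fun c hc => H.pos_face_succ_degen (n + 1) c hi (by omega)) hz, sub_self, map_zero]
    · obtain ⟨n, rfl⟩ : ∃ l, n = l + 1 := ⟨n - 1, by omega⟩
      have face_mem := H.linearize_face_mem true (i := n + 2) (by omega) (by omega) hz
      rw [linearize_linearize_congr (g' := d true (n + 2)) (fun c hc =>
          H.face_degen_of_gt true (n + 3) i c hi (by omega) (by omega)) hz,
        ← linearize_linearize_congr (f := s i) (g := s (n + 1)) (fun c hc =>
          H.degen_degen i (n + 1) c hi (by omega) (by omega)) face_mem, ← map_sub]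
      exact H.etaC_degen_eq_zero (n + 2) (by omega) i hi hlt _
        (sub_mem hz (H.linearize_degen_face_mem (by omega) hz))

theorem mem_normPart_iff (H : IsSemiStrongSkewCubical len d s) {x : I →₀ A} :
    x ∈ normPart len s (d true) k ↔
      x ∈ levC len k ∧ ∀ j, 2 ≤ j → j ≤ k → linearize A (d true j) x = 0 := by
  constructor
  · rintro ⟨y, hy, rfl⟩
    have eta_mem := sub_mem hy (H.degPart_le_levC k (H.sub_etaC_mem_degPart k le_rfl y hy))
    rw [sub_sub_cancel] at eta_mem
    exact ⟨eta_mem, H.face_etaC_eq_zero k le_rfl y hy fun j _ hkj hjk => by omega⟩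
  · rintro ⟨hx, hd⟩
    exact ⟨x, hx, etaC_eq_self k hd⟩

theorem degPart_sup_normPart (H : IsSemiStrongSkewCubical len d s) (k : ℕ) :
    degPart (A := A) len s k ⊔ normPart len s (d true) k = levC len k := by
  refine le_antisymm
    (sup_le (H.degPart_le_levC k) fun x hx => (H.mem_normPart_iff.1 hx).1) fun x hx => ?_
  rw [← sub_add_cancel x (etaC s (d true) k x)]
  exact Submodule.add_mem_sup (H.sub_etaC_mem_degPart k le_rfl x hx) ⟨x, hx, rfl⟩

theorem degPart_inf_normPart (H : IsSemiStrongSkewCubical len d s) (k : ℕ) :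
    degPart (A := A) len s k ⊓ normPart len s (d true) k = ⊥ := by
  have degPart_le_ker : degPart len s k ≤ LinearMap.ker (etaC (A := A) s (d true) k) :=
    degPart_le fun i hi hik z hz => H.etaC_degen_eq_zero k le_rfl i hi hik z hz
  refine eq_bot_iff.2 fun x ⟨hdeg, hnorm⟩ => ?_
  rw [Submodule.mem_bot, ← etaC_eq_self (s := s) k (H.mem_normPart_iff.1 hnorm).2]
  exact degPart_le_ker hdeg

theorem face_degen_eq_face_succ_degen (H : IsSemiStrongSkewCubical len d s) :
    ∀ ε i p, 1 ≤ i → i ≤ len p → d ε i (s i p) = d ε (i + 1) (s i p)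
  | false, i, p, hi, hip => H.neg_face_degen i p hi hip
  | true, i, p, hi, hip => by
    rw [H.pos_face_degen i p hi hip, H.pos_face_succ_degen i p hi hip]

theorem alternatingFaceSum_mem_degPart (H : IsSemiStrongSkewCubical len d s) (ε : Bool)
    {x : I →₀ A} (hx : x ∈ degPart len s k) :
    alternatingFaceSum A (d ε) k x ∈ degPart len s (k - 1) := by
  refine degPart_le (S := (degPart len s (k - 1)).comap (alternatingFaceSum A (d ε) k))
    (fun i hi hik z hz => ?_) hx
  obtain ⟨i, rfl⟩ := Nat.exists_eq_add_of_le' hi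
  simp only [Submodule.mem_comap, alternatingFaceSum, LinearMap.sum_apply, LinearMap.smul_apply]
  refine alternating_sum_mem_of_eq_succ _ hik (linearize_linearize_congr
    (fun c hc => H.face_degen_eq_face_succ_degen ε (i + 1) c hi (by omega)) hz)
    fun l hlk hl hl' => ?_
  rcases Nat.lt_or_ge l i with hlt | hge
  · rw [linearize_linearize_congr (fun c hc =>
      H.face_degen_of_lt ε (l + 1) (i + 1) c (by omega) (by omega) (by omega)) hz]
    exact mem_degPart (by omega) (by omega)
      (H.linearize_face_mem ε (by omega) (by omega) hz)
  · rw [linearize_linearize_congr (fun c hc =>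
      H.face_degen_of_gt ε (l + 1) (i + 1) c (by omega) (by omega) (by omega)) hz]
    exact mem_degPart (by omega) (by omega)
      (H.linearize_face_mem ε (by omega) (by omega) hz)

theorem face_face_eq_zero_of_mem_normPart (H : IsSemiStrongSkewCubical len d s) (ε : Bool)
    {x : I →₀ A} (hx : x ∈ normPart len s (d true) k) {i j : ℕ} (hi : 1 ≤ i) (hik : i ≤ k)
    (hj : 2 ≤ j) (hjk : j ≤ k - 1) : linearize A (d true j) (linearize A (d ε i) x) = 0 := by
  obtain ⟨hlev, hd⟩ := H.mem_normPart_iff.1 hx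
  rcases Nat.lt_or_ge j i with hji | hij
  · rw [linearize_linearize_congr
        (fun c hc => H.face_face true ε j i c (by omega) hji (by omega)) hlev,
      hd j hj (by omega), map_zero]
  · rw [← linearize_linearize_congr (f' := d true j)
        (fun c hc => H.face_face ε true i (j + 1) c hi (by omega) (by omega)) hlev,
      hd (j + 1) (by omega) (by omega), map_zero]

theorem alternatingFaceSum_mem_normPart (H : IsSemiStrongSkewCubical len d s) (ε : Bool)
    {x : I →₀ A} (hx : x ∈ normPart len s (d true) k) :
    alternatingFaceSum A (d ε) k x ∈ normPart len s (d true) (k - 1) := by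
  have hlev := (H.mem_normPart_iff.1 hx).1
  simp only [alternatingFaceSum, LinearMap.sum_apply, LinearMap.smul_apply]
  refine Submodule.sum_mem _ fun i hi => Submodule.smul_mem _ _ ?_
  have hik : i + 1 ≤ k := Finset.mem_range.1 hi
  exact H.mem_normPart_iff.2 ⟨H.linearize_face_mem ε (by omega) hik hlev,
    fun j hj hjk => H.face_face_eq_zero_of_mem_normPart ε hx (by omega) hik hj hjk⟩

theorem map_bdryC_degPart_le (H : IsSemiStrongSkewCubical len d s) (α β : ℤ) (k : ℕ) :
    (degPart (A := A) len s k).map (bdryC len (d true) (d false) α β)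
      ≤ degPart len s (k - 1) := by
  rintro _ ⟨x, hx, rfl⟩
  rw [bdryC_eq _ _ α β (H.degPart_le_levC k hx)]
  exact add_mem (Submodule.smul_mem _ α (H.alternatingFaceSum_mem_degPart true hx))
    (Submodule.smul_mem _ β (H.alternatingFaceSum_mem_degPart false hx))

theorem map_bdryC_normPart_le (H : IsSemiStrongSkewCubical len d s) (α β : ℤ) (k : ℕ) :
    (normPart (A := A) len s (d true) k).map (bdryC len (d true) (d false) α β)
      ≤ normPart len s (d true) (k - 1) := by
  rintro _ ⟨x, hx, rfl⟩
  rw [bdryC_eq _ _ α β (H.mem_normPart_iff.1 hx).1]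
  exact add_mem (Submodule.smul_mem _ α (H.alternatingFaceSum_mem_normPart true hx))
    (Submodule.smul_mem _ β (H.alternatingFaceSum_mem_normPart false hx))

end IsSemiStrongSkewCubical

end Linearization

/-- For a weakly RI-compatible left non-degenerate braided set
`(X, σ)`, a solid right module `M` and a left module `N`, the data
`(M × X^k × N, d'_i, d_i, s_i)` is a semi-strong skew cubical structure in Set,
and for every abelian group `A` the linearized chain groups split as
`C_k(A) = C_k^D ⊕ C_k^N`, the splitting being preserved by all differentials
`∂^{(α,β)}`. -/
theorem statement_11 {X M N : Type*} (σ : X × X → X × X)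
    (hYB : s12 σ ∘ s23 σ ∘ s12 σ = s23 σ ∘ s12 σ ∘ s23 σ)
    (star : X → X → X)
    (hstar1 : ∀ a b : X, (σ (star b a, b)).2 = a)
    (hstar2 : ∀ a b : X, star b ((σ (a, b)).2) = a)
    (dot : X → X → X)
    (hdot : ∀ a b : X, dot a b = (σ (star b a, b)).1)
    (tri : X → X → X)
    (htri : ∀ a b : X, tri a b = (σ (dot b a, b)).2)
    (hRI : ∀ a : X, dot a a = star a a)
    (tmap : X → X) (htmap : ∀ a : X, tmap a = dot a a)
    (actM : M → X → M)
    (hM : ∀ (m : M) (a b : X),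
      actM (actM m a) b = actM (actM m (σ (a, b)).1) (σ (a, b)).2)
    (actMinv : M → X → M)
    (hsolid : ∀ (m : M) (a : X),
      actM (actMinv m a) a = m ∧ actMinv (actM m a) a = m)
    (actN : X → N → N)
    (hN : ∀ (a b : X) (n : N),
      actN a (actN b n) = actN (σ (a, b)).1 (actN (σ (a, b)).2 n))
    (Jinv : List X → List X)
    (hJ1 : ∀ l : List X, guitar σ (Jinv l) = l)
    (hJ2 : ∀ l : List X, Jinv (guitar σ l) = l) :
    -- (I) semi-strong skew cubical structure in Set:
    ((∀ (k i j : ℕ) (p : M × List X × N), p.2.1.length = k →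
        1 ≤ i → i < j → j ≤ k →
        dPrime tri Jinv actM i (dPrime tri Jinv actM j p)
          = dPrime tri Jinv actM (j - 1) (dPrime tri Jinv actM i p) ∧
        dPrime tri Jinv actM i (dCyc star dot actN j p)
          = dCyc star dot actN (j - 1) (dPrime tri Jinv actM i p) ∧
        dCyc star dot actN i (dPrime tri Jinv actM j p)
          = dPrime tri Jinv actM (j - 1) (dCyc star dot actN i p) ∧
        dCyc star dot actN i (dCyc star dot actN j p)
          = dCyc star dot actN (j - 1) (dCyc star dot actN i p)) ∧
      (∀ (k i j : ℕ) (p : M × List X × N), p.2.1.length = k →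
        1 ≤ i → i < j → j ≤ k →
        dPrime tri Jinv actM i (sCyc tri Jinv tmap actMinv j p)
          = sCyc tri Jinv tmap actMinv (j - 1) (dPrime tri Jinv actM i p) ∧
        dCyc star dot actN i (sCyc tri Jinv tmap actMinv j p)
          = sCyc tri Jinv tmap actMinv (j - 1) (dCyc star dot actN i p)) ∧
      (∀ (k i j : ℕ) (p : M × List X × N), p.2.1.length = k →
        1 ≤ j → j + 1 < i → i ≤ k + 1 →
        dPrime tri Jinv actM i (sCyc tri Jinv tmap actMinv j p)
          = sCyc tri Jinv tmap actMinv j (dPrime tri Jinv actM (i - 1) p) ∧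
        dCyc star dot actN i (sCyc tri Jinv tmap actMinv j p)
          = sCyc tri Jinv tmap actMinv j (dCyc star dot actN (i - 1) p)) ∧
      (∀ (k i : ℕ) (p : M × List X × N), p.2.1.length = k → 1 ≤ i → i ≤ k →
        dCyc star dot actN i (sCyc tri Jinv tmap actMinv i p)
          = dCyc star dot actN (i + 1) (sCyc tri Jinv tmap actMinv i p)) ∧
      (∀ (k i j : ℕ) (p : M × List X × N), p.2.1.length = k →
        1 ≤ i → i ≤ j → j ≤ k →
        sCyc tri Jinv tmap actMinv i (sCyc tri Jinv tmap actMinv j p)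
          = sCyc tri Jinv tmap actMinv (j + 1) (sCyc tri Jinv tmap actMinv i p)) ∧
      (∀ (k i : ℕ) (p : M × List X × N), p.2.1.length = k → 1 ≤ i → i ≤ k →
        dPrime tri Jinv actM i (sCyc tri Jinv tmap actMinv i p) = p ∧
        dPrime tri Jinv actM (i + 1) (sCyc tri Jinv tmap actMinv i p) = p)) ∧
    -- (II) the linearized splitting, preserved by all differentials:
    (∀ (A : Type) (_ : AddCommGroup A)
        (len : M × List X × N → ℕ)
        (sS dP dM : ℕ → (M × List X × N → M × List X × N)),
      (∀ p : M × List X × N, len p = p.2.1.length) →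
      (∀ i, sS i = sCyc tri Jinv tmap actMinv i) →
      (∀ i, dP i = dPrime tri Jinv actM i) →
      (∀ i, dM i = dCyc star dot actN i) →
      (∀ k : ℕ,
        degPart (A := A) len sS k ⊔ normPart (A := A) len sS dP k
          = levC len k ∧
        degPart (A := A) len sS k ⊓ normPart (A := A) len sS dP k = ⊥) ∧
      (∀ (α β : ℤ) (k : ℕ),
        Submodule.map (bdryC (A := A) len dP dM α β)
            (degPart (A := A) len sS k)
          ≤ degPart (A := A) len sS (k - 1) ∧
        Submodule.map (bdryC (A := A) len dP dM α β)
            (normPart (A := A) len sS dP k)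
          ≤ normPart (A := A) len sS dP (k - 1))) := by
  have h : IsLeftNondegenerateBraided σ star dot := ⟨hYB, hstar1, hstar2, hdot⟩
  have hM' : IsSolidModule star dot actM actMinv :=
    ⟨fun m u v => by rw [hM, hstar1, ← hdot], fun m a => (hsolid m a).1, fun m a => (hsolid m a).2⟩
  have hN' (u v n) : actN (star v u) (actN v n) = actN (dot u v) (actN u n) := by
    rw [hN, hstar1, ← hdot]
  obtain rfl : tmap = square dot := funext htmap
  have H := (h.computesChi htri hJ2).isSemiStrongSkewCubical h.isQCycle hRI hM' hN'
  refine ⟨⟨?_, ?_, ?_, ?_, ?_, ?_⟩, ?_⟩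
  · rintro _ i j p rfl hi hij hj
    exact ⟨H.face_face true true i j p hi hij hj, H.face_face true false i j p hi hij hj,
      H.face_face false true i j p hi hij hj, H.face_face false false i j p hi hij hj⟩
  · rintro _ i j p rfl hi hij hj
    exact ⟨H.face_degen_of_lt true i j p hi hij hj, H.face_degen_of_lt false i j p hi hij hj⟩
  · rintro _ i j p rfl hj hji hi
    exact ⟨H.face_degen_of_gt true i j p hj hji hi, H.face_degen_of_gt false i j p hj hji hi⟩
  · rintro _ i p rfl
    exact H.neg_face_degen i p
  · rintro _ i j p rfl
    exact H.degen_degen i j p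
  · rintro _ i p rfl hi hip
    exact ⟨H.pos_face_degen i p hi hip, H.pos_face_succ_degen i p hi hip⟩
  · intro A _ len sS dP dM hlen hs hdP hdM
    cases funext hlen; cases funext hs; cases funext hdP; cases funext hdM
    exact ⟨fun k => ⟨H.degPart_sup_normPart k, H.degPart_inf_normPart k⟩,
      fun α β k => ⟨H.map_bdryC_degPart_le α β k, H.map_bdryC_normPart_le α β k⟩⟩
end

section
/- Let (X, ·) be a cycle set, A an abelian group, and f : X × X → A any map. Endow the set A × X with the operation (α, x)·(β, y) := (β + f(x,y), x·y). Then A × X with this operation is a cycle set if and only if f is a 2-cocycle, i.e., f(x,z) + f(x·y, x·z) = f(y,z) + f(y·x, y·z) for all x, y, z ∈ X. -/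
/-!
The left translation of `A × X` by `(α, x)` is a translation of each fibre `A × {y}` by `f (x, y)`
followed by `y ↦ x·y` on the base, and the former is always bijective. The cycle identity on
`A × X` is the cycle identity on the second coordinate and, apart from a common left summand
in `A`, the cocycle condition on the first.
-/

section Definitions

variable {X A : Type*}

/-- The identity `(a·b)·(a·c) = (b·a)·(b·c)` required of a cycle set. -/
def CycleIdentity (op : X → X → X) : Prop :=
  ∀ a b c : X, op (op a b) (op a c) = op (op b a) (op b c)

/-- The operation `op` makes `X` a cycle set; `op a` is the left translation `b ↦ a·b`. -/
def IsCycleSet (op : X → X → X) : Prop :=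
  (∀ a : X, Function.Bijective (op a)) ∧ CycleIdentity op

/-- The map `f` is a 2-cocycle on `(X, op)` with values in `A`; the order of the summands
is the one in which `extensionOp` adds them, which matters for noncommutative `A`. -/
def IsTwoCocycle [Add A] (op : X → X → X) (f : X × X → A) : Prop :=
  ∀ x y z : X, f (x, z) + f (op x y, op x z) = f (y, z) + f (op y x, op y z)

/-- The operation `(α, x)·(β, y) = (β + f (x, y), x·y)` on `A × X`, extending `op` by `f`. -/
def extensionOp [Add A] (op : X → X → X) (f : X × X → A) (u v : A × X) : A × X :=
  (v.1 + f (u.2, v.2), op u.2 v.2)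

end Definitions

section Extension

variable {X A : Type*} (op : X → X → X) (f : X × X → A)

theorem extensionOp_eq_prodMap_comp_prodCongrLeft [AddGroup A] (u : A × X) :
    extensionOp op f u =
      Prod.map id (op u.2) ∘ Equiv.prodCongrLeft fun y => Equiv.addRight (f (u.2, y)) :=
  rfl

theorem extensionOp_bijective_iff [AddGroup A] (u : A × X) :
    Function.Bijective (extensionOp op f u) ↔ Function.Bijective (op u.2) := by
  have : Nonempty X := ⟨u.2⟩
  rw [extensionOp_eq_prodMap_comp_prodCongrLeft,
    Function.Bijective.of_comp_iff _ (Equiv.bijective _), Prod.map_bijective]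
  exact and_iff_right Function.bijective_id

theorem cycleIdentity_extensionOp_iff [AddMonoid A] :
    CycleIdentity (extensionOp op f) ↔ CycleIdentity op ∧ IsTwoCocycle op f := by
  constructor
  · intro h
    refine ⟨fun x y z => congrArg Prod.snd (h (0, x) (0, y) (0, z)), fun x y z => ?_⟩
    simpa only [extensionOp, zero_add] using congrArg Prod.fst (h (0, x) (0, y) (0, z))
  · rintro ⟨hcycle, hcocycle⟩ ⟨α, x⟩ ⟨β, y⟩ ⟨γ, z⟩
    simp only [extensionOp, add_assoc, hcycle x y z, hcocycle x y z]

theorem statement_12_general [AddGroup A] :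
    IsCycleSet (extensionOp op f) ↔ IsCycleSet op ∧ IsTwoCocycle op f := by
  simp only [IsCycleSet, extensionOp_bijective_iff, cycleIdentity_extensionOp_iff, Prod.forall,
    forall_const, and_assoc]

end Extension

/-- For a cycle set `(X, ·)`, an abelian group `A`, and a map
`f : X × X → A`, the operation `(α,x)·(β,y) = (β + f(x,y), x·y)` makes `A × X`
a cycle set if and only if `f` is a 2-cocycle. -/
theorem statement_12 {X A : Type*} [AddCommGroup A]
    (op : X → X → X)
    (hbij : ∀ a : X, Function.Bijective (op a))
    (hcyc : ∀ a b c : X, op (op a b) (op a c) = op (op b a) (op b c))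
    (f : X × X → A)
    (mul : A × X → A × X → A × X)
    (hmul : ∀ u v : A × X, mul u v = (v.1 + f (u.2, v.2), op u.2 v.2)) :
    ((∀ u : A × X, Function.Bijective (mul u)) ∧
      (∀ u v w : A × X, mul (mul u v) (mul u w) = mul (mul v u) (mul v w)))
    ↔ (∀ x y z : X,
        f (x, z) + f (op x y, op x z) = f (y, z) + f (op y x, op y z)) := by
  obtain rfl : mul = extensionOp op f := funext₂ hmul
  exact (statement_12_general op f).trans (and_iff_right ⟨hbij, hcyc⟩)
end

section
/- Let (X, ·) be a cycle set, A an abelian group, and (Y, p) an extension of X by A. For any set-theoretic section s : X → Y of p (i.e., p ∘ s = id_X), there is a unique map f : X × X → A satisfying f(x₁,x₂) • s(x₁·x₂) = s(x₁)·s(x₂) for all x₁, x₂ ∈ X (where • is the A-action on Y), and this f is a 2-cocycle of X with values in A. Moreover, if s' : X → Y is another section with associated 2-cocycle f', then f and f' are cohomologous. -/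
/-!
Everything is read off from the freeness of the action of `A` on `Y`. Both sides of the cocycle
identity are the displacement from `s ((x · y) · (x · z))` to `(s x · s y) · (s x · s z)`, an
element which the cycle identity of `Y` makes symmetric in `x` and `y`; for two sections, the
displacement `γ x` from `s' x` to `s x` is the cochain relating their cocycles.
-/

/-- Rump's cycloid equation, written for a multiplication `*`. A cycle set is a cycloid all of
whose left translations are bijective. -/
class IsCycloid (M : Type*) [Mul M] : Prop where
  mul_mul_mul_swap (a b c : M) : (a * b) * (a * c) = (b * a) * (b * c)

theorem IsCycloid.of_surjective {M N : Type*} [Mul M] [Mul N] [IsCycloid M] (p : M →ₙ* N)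
    (hp : Function.Surjective p) : IsCycloid N where
  mul_mul_mul_swap := hp.forall₃.mpr fun a b c => by
    simp only [← map_mul, mul_mul_mul_swap a b c]

/-- An extension of `X` by `A` in the sense of cycle sets: `A` acts simply transitively on the
fibers of `p`, trivially on left factors and equivariantly on right factors. Surjectivity of `p`
is not part of this predicate. -/
structure IsCycloidExtension {X Y : Type*} (A : Type*) [Mul X] [Mul Y] [AddMonoid A]
    [AddAction A Y] (p : Y →ₙ* X) : Prop where
  map_vadd (α : A) (y : Y) : p (α +ᵥ y) = p y
  existsUnique_vadd_eq {y z : Y} (hyz : p y = p z) : ∃! α : A, α +ᵥ z = y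
  vadd_mul (α : A) (y z : Y) : (α +ᵥ y) * z = y * z
  mul_vadd (α : A) (y z : Y) : y * (α +ᵥ z) = α +ᵥ (y * z)

/-- The factor set of a section `s`: it measures the failure of `s` to be multiplicative. -/
def IsFactorSet {X Y A : Type*} [Mul X] [Mul Y] [VAdd A Y] (s : X → Y) (f : X × X → A) : Prop :=
  ∀ x₁ x₂ : X, f (x₁, x₂) +ᵥ s (x₁ * x₂) = s x₁ * s x₂

/-- The 2-cocycles of the cohomology of cycle sets. -/
def IsCycloidTwoCocycle {X A : Type*} [Mul X] [Add A] (f : X × X → A) : Prop :=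
  ∀ x y z : X, f (x, z) + f (x * y, x * z) = f (y, z) + f (y * x, y * z)

/-- The relation of differing by a coboundary in the cohomology of cycle sets; the coboundary of
`γ` sends `(x, y)` to `γ (x * y) - γ y`. -/
def AreCohomologous {X A : Type*} [Mul X] [Sub A] (f g : X × X → A) : Prop :=
  ∃ γ : X → A, ∀ x y : X, g (x, y) - f (x, y) = γ (x * y) - γ y

namespace IsCycloidExtension

section AddMonoid

variable {X Y A : Type*} [Mul X] [Mul Y] [AddMonoid A] [AddAction A Y] {p : Y →ₙ* X}
  {s s' : X → Y} {f f' : X × X → A}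

theorem vadd_right_cancel (h : IsCycloidExtension A p) {α β : A} {y : Y}
    (hαβ : α +ᵥ y = β +ᵥ y) : α = β :=
  (h.existsUnique_vadd_eq (h.map_vadd β y)).unique hαβ rfl

theorem existsUnique_forall_vadd_eq (h : IsCycloidExtension A p) {ι : Type*} {u v : ι → Y}
    (huv : ∀ i, p (u i) = p (v i)) : ∃! γ : ι → A, ∀ i, γ i +ᵥ v i = u i := by
  choose γ hγ using fun i => (h.existsUnique_vadd_eq (huv i)).exists
  exact ⟨γ, hγ, fun δ hδ => funext fun i => h.vadd_right_cancel ((hδ i).trans (hγ i).symm)⟩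

theorem existsUnique_isFactorSet (h : IsCycloidExtension A p) (hs : Function.RightInverse s p) :
    ∃! f : X × X → A, IsFactorSet s f := by
  have same_fiber (q : X × X) : p (s q.1 * s q.2) = p (s (q.1 * q.2)) := by
    rw [map_mul, hs, hs, hs]
  simpa only [IsFactorSet, Prod.forall] using h.existsUnique_forall_vadd_eq same_fiber

theorem mul_mul_mul_eq_vadd (h : IsCycloidExtension A p) (hf : IsFactorSet s f) (x y z : X) :
    (s x * s y) * (s x * s z) =
      (f (x, z) + f (x * y, x * z)) +ᵥ s ((x * y) * (x * z)) := by
  calc (s x * s y) * (s x * s z)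
      = (f (x, y) +ᵥ s (x * y)) * (f (x, z) +ᵥ s (x * z)) := by rw [hf, hf]
    _ = f (x, z) +ᵥ (s (x * y) * s (x * z)) := by rw [h.vadd_mul, h.mul_vadd]
    _ = (f (x, z) + f (x * y, x * z)) +ᵥ s ((x * y) * (x * z)) := by rw [← hf, add_vadd]

theorem isCycloidTwoCocycle_of_isFactorSet [IsCycloid X] [IsCycloid Y]
    (h : IsCycloidExtension A p) (hf : IsFactorSet s f) : IsCycloidTwoCocycle f := by
  intro x y z
  apply h.vadd_right_cancel (y := s ((x * y) * (x * z)))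
  rw [← h.mul_mul_mul_eq_vadd hf, IsCycloid.mul_mul_mul_swap, h.mul_mul_mul_eq_vadd hf,
    IsCycloid.mul_mul_mul_swap x y z]

theorem factorSet_add_eq_add_factorSet (h : IsCycloidExtension A p) (hf : IsFactorSet s f)
    (hf' : IsFactorSet s' f') {γ : X → A} (hγ : ∀ x, γ x +ᵥ s' x = s x) (x y : X) :
    f (x, y) + γ (x * y) = γ y + f' (x, y) := by
  apply h.vadd_right_cancel (y := s' (x * y))
  calc (f (x, y) + γ (x * y)) +ᵥ s' (x * y)
      = s x * s y := by rw [add_vadd, hγ, hf]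
    _ = (γ x +ᵥ s' x) * (γ y +ᵥ s' y) := by rw [hγ, hγ]
    _ = γ y +ᵥ (s' x * s' y) := by rw [h.vadd_mul, h.mul_vadd]
    _ = (γ y + f' (x, y)) +ᵥ s' (x * y) := by rw [← hf', add_vadd]

end AddMonoid

theorem areCohomologous_of_isFactorSet {X Y A : Type*} [Mul X] [Mul Y] [AddCommGroup A]
    [AddAction A Y] {p : Y →ₙ* X} {s s' : X → Y} {f f' : X × X → A} (h : IsCycloidExtension A p)
    (hs : Function.RightInverse s p) (hs' : Function.RightInverse s' p)
    (hf : IsFactorSet s f) (hf' : IsFactorSet s' f') : AreCohomologous f f' := by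
  have same_fiber (x : X) : p (s x) = p (s' x) := by rw [hs, hs']
  obtain ⟨γ, hγ, -⟩ := h.existsUnique_forall_vadd_eq same_fiber
  refine ⟨γ, fun x y => ?_⟩
  rw [sub_eq_sub_iff_add_eq_add, add_comm (f' _), add_comm (γ (x * y))]
  exact (h.factorSet_add_eq_add_factorSet hf hf' hγ x y).symm

end IsCycloidExtension

theorem statement_13_general {X Y A : Type*} [Mul X] [Mul Y] [IsCycloid Y] [AddCommGroup A]
    [AddAction A Y] {p : Y →ₙ* X} (h : IsCycloidExtension A p) {s : X → Y}
    (hs : Function.RightInverse s p) :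
    (∃! f : X × X → A, IsFactorSet s f) ∧
    ∀ f : X × X → A, IsFactorSet s f →
      IsCycloidTwoCocycle f ∧
      ∀ (s' : X → Y) (f' : X × X → A), Function.RightInverse s' p → IsFactorSet s' f' →
        AreCohomologous f f' := by
  have : IsCycloid X := .of_surjective p hs.surjective
  exact ⟨h.existsUnique_isFactorSet hs, fun _ hf =>
    ⟨h.isCycloidTwoCocycle_of_isFactorSet hf, fun _ _ hs' hf' =>
      h.areCohomologous_of_isFactorSet hs hs' hf hf'⟩⟩

/-- Given an extension `(Y, p)` of a cycle set `(X, ·)` by an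
abelian group `A` and a set-theoretic section `s` of `p`, there is a unique map
`f : X × X → A` with `f(x₁,x₂) • s(x₁·x₂) = s(x₁)·s(x₂)`; this `f` is a
2-cocycle, and the cocycles associated to two sections are cohomologous. -/
theorem statement_13 {X Y A : Type*} [AddCommGroup A]
    (opX : X → X → X)
    (hXbij : ∀ a : X, Function.Bijective (opX a))
    (hXcyc : ∀ a b c : X, opX (opX a b) (opX a c) = opX (opX b a) (opX b c))
    (opY : Y → Y → Y)
    (hYbij : ∀ y : Y, Function.Bijective (opY y))
    (hYcyc : ∀ y z w : Y, opY (opY y z) (opY y w) = opY (opY z y) (opY z w))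
    (p : Y → X) (hsurj : Function.Surjective p)
    (hhom : ∀ y z : Y, p (opY y z) = opX (p y) (p z))
    (act : A → Y → Y)
    (hact0 : ∀ y : Y, act 0 y = y)
    (hactadd : ∀ (α β : A) (y : Y), act (α + β) y = act α (act β y))
    (hreg : ∀ y z : Y, p y = p z → ∃! α : A, act α z = y)
    (hfib : ∀ (α : A) (y : Y), p (act α y) = p y)
    (hcompat1 : ∀ (α : A) (y z : Y), opY (act α y) z = opY y z)
    (hcompat2 : ∀ (α : A) (y z : Y), opY y (act α z) = act α (opY y z))
    (s : X → Y) (hs : ∀ x : X, p (s x) = x) :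
    (∃! f : X × X → A,
        ∀ x₁ x₂ : X, act (f (x₁, x₂)) (s (opX x₁ x₂)) = opY (s x₁) (s x₂)) ∧
    (∀ f : X × X → A,
      (∀ x₁ x₂ : X, act (f (x₁, x₂)) (s (opX x₁ x₂)) = opY (s x₁) (s x₂)) →
      ((∀ x y z : X,
          f (x, z) + f (opX x y, opX x z) = f (y, z) + f (opX y x, opX y z)) ∧
       (∀ (s' : X → Y) (f' : X × X → A), (∀ x : X, p (s' x) = x) →
         (∀ x₁ x₂ : X, act (f' (x₁, x₂)) (s' (opX x₁ x₂)) = opY (s' x₁) (s' x₂)) →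
         ∃ γ : X → A, ∀ x y : X, f' (x, y) - f (x, y) = γ (opX x y) - γ y))) := by
  let _ : Mul X := ⟨opX⟩
  let _ : Mul Y := ⟨opY⟩
  let _ : AddAction A Y := { vadd := act, zero_vadd := hact0, add_vadd := hactadd }
  have : IsCycloid Y := ⟨hYcyc⟩
  exact statement_13_general (p := ⟨p, hhom⟩) ⟨hfib, hreg _ _, hcompat1, hcompat2⟩ hs
end

section
/- Let (X, ·) be a cycle set, A an abelian group, and f, g ∈ Z²(X, A). The extensions (A ×_f X, p_X) and (A ×_g X, p_X) are equivalent — i.e., there is a cycle-set isomorphism F : A ×_f X → A ×_g X with p_X ∘ F = p_X and F(α • (β, x)) = α • F(β, x) — if and only if f and g are cohomologous. -/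
/-!
A fibre-preserving `A`-equivariant self-map of `A × X` is determined by its values on `{0} × X`, so
it translates the fibre over `x` by some `γ x`; such maps are bijective. The homomorphism equation
for this translation, read in the fibre over `op x y`, is
`f (x, y) + γ (op x y) = γ y + g (x, y)`, which says that `f` and `g` differ by the coboundary
of `γ`.
-/

section Extension

variable {X A : Type*}

variable [AddGroup A]

/-- The permutation `(α, x) ↦ (α + γ x, x)` of `A × X`. Translating on the right makes it commute
with the action of `A` by left translations. -/
def fiberTranslation (γ : X → A) : A × X ≃ A × X :=
  Equiv.prodCongrLeft fun x => Equiv.addRight (γ x)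

theorem fiberTranslation_apply (γ : X → A) (u : A × X) :
    fiberTranslation γ u = (u.1 + γ u.2, u.2) :=
  rfl

theorem fiberTranslation_add_left (γ : X → A) (α β : A) (x : X) :
    fiberTranslation γ (α + β, x) =
      (α + (fiberTranslation γ (β, x)).1, (fiberTranslation γ (β, x)).2) := by
  simp only [fiberTranslation_apply, add_assoc]

theorem eq_fiberTranslation {F : A × X → A × X} (hsnd : ∀ u, (F u).2 = u.2)
    (hadd : ∀ (α β : A) (x : X), F (α + β, x) = (α + (F (β, x)).1, (F (β, x)).2)) :
    F = fiberTranslation fun x => (F (0, x)).1 := by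
  funext ⟨α, x⟩
  calc F (α, x) = F (α + 0, x) := by rw [add_zero]
    _ = (α + (F (0, x)).1, x) := by rw [hadd, hsnd]

theorem fiberTranslation_extensionOp_iff (op : X → X → X) (f g : X × X → A) (γ : X → A) :
    (∀ u v, fiberTranslation γ (extensionOp op f u v) =
        extensionOp op g (fiberTranslation γ u) (fiberTranslation γ v)) ↔
      ∀ x y, g (x, y) = -γ y + f (x, y) + γ (op x y) := by
  have fiberwise (u v : A × X) :
      fiberTranslation γ (extensionOp op f u v) =
          extensionOp op g (fiberTranslation γ u) (fiberTranslation γ v) ↔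
        g (u.2, v.2) = -γ v.2 + f (u.2, v.2) + γ (op u.2 v.2) := by
    simp only [extensionOp, fiberTranslation_apply, Prod.mk.injEq, and_true, add_assoc,
      add_right_inj, eq_neg_add_iff_add_eq]
    exact eq_comm
  simp only [fiberwise]
  exact ⟨fun h x y => h (0, x) (0, y), fun h u v => h u.2 v.2⟩

theorem statement_15_general (op : X → X → X) (f g : X × X → A) :
    (∃ F : A × X → A × X, Function.Bijective F ∧
        (∀ u v, F (extensionOp op f u v) = extensionOp op g (F u) (F v)) ∧
        (∀ u, (F u).2 = u.2) ∧
        (∀ (α β : A) (x : X), F (α + β, x) = (α + (F (β, x)).1, (F (β, x)).2)))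
    ↔ ∃ γ : X → A, ∀ x y, g (x, y) = -γ y + f (x, y) + γ (op x y) := by
  constructor
  · rintro ⟨F, -, hop, hsnd, hadd⟩
    rw [eq_fiberTranslation hsnd hadd] at hop
    exact ⟨_, (fiberTranslation_extensionOp_iff op f g _).1 hop⟩
  · rintro ⟨γ, hγ⟩
    exact ⟨fiberTranslation γ, (fiberTranslation γ).bijective,
      (fiberTranslation_extensionOp_iff op f g γ).2 hγ, fun _ => rfl, fiberTranslation_add_left γ⟩

end Extension

theorem sub_eq_sub_iff_eq_neg_add_add {A : Type*} [AddCommGroup A] {a b c d : A} :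
    a - b = c - d ↔ a = -d + b + c := by
  rw [sub_eq_iff_eq_add, show c - d + b = -d + b + c by abel]

/-- Two extensions `A ×_f X` and `A ×_g X` built from 2-cocycles
`f, g` are equivalent if and only if `f` and `g` are cohomologous. -/
theorem statement_15 {X A : Type*} [AddCommGroup A]
    (op : X → X → X)
    (hbij : ∀ a : X, Function.Bijective (op a))
    (hcyc : ∀ a b c : X, op (op a b) (op a c) = op (op b a) (op b c))
    (f g : X × X → A)
    (hf : ∀ x y z : X,
      f (x, z) + f (op x y, op x z) = f (y, z) + f (op y x, op y z))
    (hg : ∀ x y z : X,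
      g (x, z) + g (op x y, op x z) = g (y, z) + g (op y x, op y z)) :
    (∃ F : A × X → A × X, Function.Bijective F ∧
        (∀ u v : A × X,
          F (v.1 + f (u.2, v.2), op u.2 v.2)
            = ((F v).1 + g ((F u).2, (F v).2), op (F u).2 (F v).2)) ∧
        (∀ u : A × X, (F u).2 = u.2) ∧
        (∀ (α β : A) (x : X), F (α + β, x) = (α + (F (β, x)).1, (F (β, x)).2)))
    ↔ ∃ γ : X → A, ∀ x y : X, g (x, y) - f (x, y) = γ (op x y) - γ y := by
  simp only [sub_eq_sub_iff_eq_neg_add_add]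
  exact statement_15_general op f g
end

section
/- Let (X, ·) be a finite cycle set with exactly m orbits. For n ≥ 0 let C_n be the free abelian group on Xⁿ, with differential ∂_n(x₁,…,x_n) := ∑_{i=1}^{n−1} (−1)^i [ (x₁,…,x_{i−1},x_{i+1},…,x_n) − (x_i·x₁, …, x_i·x_{i−1}, x_i·x_{i+1}, …, x_i·x_n) ] for n ≥ 2, and ∂₁ = 0, ∂₀ = 0 (this is a chain complex). Then for every n ≥ 0 the rank of the ℤ-module H_n := ker ∂_n / im ∂_{n+1} is at least mⁿ. -/
/-- The chain group `C_n`: the free abelian group on `Xⁿ`. -/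
abbrev cycCh (X : Type*) (n : ℕ) : Type _ := (Fin n → X) →₀ ℤ

/-- The cycle-set differential `∂_{n+1} : C_{n+1} → C_n`, sending the basis
element `(x₁,…,x_{n+1})` to
`∑_{i=1}^{n} (-1)^i [(x₁,…,x̂_i,…,x_{n+1}) - (x_i·x₁,…,x_i·x_{i-1},x_i·x_{i+1},…,x_i·x_{n+1})]`. -/
noncomputable def cycBd {X : Type*} (op : X → X → X) (n : ℕ) :
    cycCh X (n + 1) →ₗ[ℤ] cycCh X n :=
  Finsupp.lsum ℕ fun v =>
    LinearMap.toSpanSingleton ℤ (cycCh X n)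
      (∑ i : Fin n, ((-1 : ℤ) ^ ((i : ℕ) + 1)) •
        (Finsupp.single (fun j => v ((Fin.castSucc i).succAbove j)) (1 : ℤ)
          - Finsupp.single
              (fun j => op (v (Fin.castSucc i)) (v ((Fin.castSucc i).succAbove j)))
              (1 : ℤ)))

/-- The full differential, with `∂_0 := 0` (trivially) and `∂_{n+1} = cycBd n`
(note `cycBd 0 = 0`, matching `∂₁ = 0`). -/
noncomputable def cycBdAll {X : Type*} (op : X → X → X) :
    (n : ℕ) → cycCh X n →ₗ[ℤ] cycCh X (n - 1)
  | 0 => 0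
  | n + 1 => cycBd op n

/-!
Fix an orbit for each of the `n` coordinates. Acting by the `i`-th coordinate of a tuple on all the
others permutes the tuples lying in the chosen orbits and turns the `i`-th plain face into the
`i`-th translated face. Hence in the boundary of the sum of these tuples the two faces cancel for
every `i`, and the sum is a cycle. Replacing every entry by its orbit, in turn, kills all
boundaries and sends the cycle above to a nonzero multiple of the basis vector given by the
chosen orbits. So the classes of these cycles, one for each `n`-tuple of orbits, are linearly
independent in homology.
-/

section Tuples

variable {X ι : Type*} (op : X → X → X)

/-- The orbits of `(X, op)`; `Quot` takes care of the equivalence closure. -/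
abbrev CycOrbits : Type _ := Quot fun a b : X => ∃ y, b = op y a

theorem mk_op_eq_mk (a b : X) : (Quot.mk _ (op a b) : CycOrbits op) = Quot.mk _ b :=
  (Quot.sound ⟨a, rfl⟩).symm

/-- The tuple of orbits of a tuple of elements. -/
def tupleOrbits (v : ι → X) : ι → CycOrbits op := fun j => Quot.mk _ (v j)

theorem tupleOrbits_surjective : Function.Surjective (tupleOrbits op (ι := ι)) :=
  fun w => ⟨fun j => (w j).out, funext fun j => (w j).out_eq⟩

theorem tupleOrbits_op (a : X) (v : ι → X) :
    tupleOrbits op (fun j => op a (v j)) = tupleOrbits op v :=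
  funext fun j => mk_op_eq_mk op a (v j)

theorem finite_setOf_tupleOrbits_eq [Finite ι]
    (hfin : ∀ q : CycOrbits op, {x | Quot.mk _ x = q}.Finite) (w : ι → CycOrbits op) :
    {v | tupleOrbits op v = w}.Finite :=
  (Set.Finite.pi' fun j => hfin (w j)).subset fun _ hv j => congrFun hv j

/-- The `i`-th entry of a tuple acts on all the other entries and is itself left unchanged. -/
def twist [DecidableEq ι] (i : ι) (v : ι → X) : ι → X :=
  Function.update (fun j => op (v i) (v j)) i (v i)

variable {op}

theorem twist_injective [DecidableEq ι] (hinj : ∀ a, Function.Injective (op a)) (i : ι) :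
    Function.Injective (twist op i) := by
  intro v w h
  have hi : v i = w i := by simpa [twist] using congrFun h i
  funext j
  obtain rfl | hj := eq_or_ne j i
  · exact hi
  · have hop : op (v i) (v j) = op (w i) (w j) := by simpa [twist, hj] using congrFun h j
    exact hinj (v i) (hi ▸ hop)

theorem tupleOrbits_twist [DecidableEq ι] (i : ι) (v : ι → X) :
    tupleOrbits op (twist op i v) = tupleOrbits op v := by
  funext j
  obtain rfl | hj := eq_or_ne j i
  · simp [tupleOrbits, twist]
  · simp [tupleOrbits, twist, hj, mk_op_eq_mk]

theorem twist_succAbove {n : ℕ} (i : Fin (n + 1)) (v : Fin (n + 1) → X) (j : Fin n) :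
    twist op i v (i.succAbove j) = op (v i) (v (i.succAbove j)) := by
  simp [twist, Fin.succAbove_ne]

end Tuples

section Chains

variable {X : Type*} {op : X → X → X} {n : ℕ}

theorem cycBd_single_one (v : Fin (n + 1) → X) :
    cycBd op n (Finsupp.single v 1) = ∑ i : Fin n, (-1 : ℤ) ^ ((i : ℕ) + 1) •
      (Finsupp.single (fun j => v (i.castSucc.succAbove j)) (1 : ℤ)
        - Finsupp.single (fun j => op (v i.castSucc) (v (i.castSucc.succAbove j))) (1 : ℤ)) := by
  simp [cycBd]

theorem sum_face_eq_sum_translated_face {M : Type*} [AddCommMonoid M]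
    (hinj : ∀ a, Function.Injective (op a)) {s : Finset (Fin (n + 1) → X)} {i : Fin (n + 1)}
    (hs : ∀ v ∈ s, twist op i v ∈ s) (f : (Fin n → X) → M) :
    ∑ v ∈ s, f (fun j => v (i.succAbove j)) =
      ∑ v ∈ s, f (fun j => op (v i) (v (i.succAbove j))) := by
  have inj_on : Set.InjOn (twist op i) s := (twist_injective hinj i).injOn
  have surj_on : Set.SurjOn (twist op i) s s :=
    Finset.surjOn_of_injOn_of_card_le _ hs inj_on le_rfl
  refine (Finset.sum_nbij (twist op i) hs inj_on surj_on fun v _ => ?_).symm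
  simp only [twist_succAbove]

theorem cycBd_sum_single_eq_zero (hinj : ∀ a, Function.Injective (op a))
    {s : Finset (Fin (n + 1) → X)} (hs : ∀ i, ∀ v ∈ s, twist op i v ∈ s) :
    cycBd op n (∑ v ∈ s, Finsupp.single v 1) = 0 := by
  simp only [map_sum, cycBd_single_one]
  rw [Finset.sum_comm]
  refine Finset.sum_eq_zero fun i _ => ?_
  rw [← Finset.smul_sum, Finset.sum_sub_distrib,
    sum_face_eq_sum_translated_face hinj (hs i.castSucc) (Finsupp.single · (1 : ℤ)),
    sub_self, smul_zero]

/-- The sum of all tuples whose entries lie in the orbits prescribed by `w`. -/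
noncomputable def orbitSum (hfin : ∀ q : CycOrbits op, {x | Quot.mk _ x = q}.Finite)
    (w : Fin n → CycOrbits op) : cycCh X n :=
  ∑ v ∈ (finite_setOf_tupleOrbits_eq op hfin w).toFinset, Finsupp.single v 1

theorem orbitSum_mem_ker_cycBdAll (hinj : ∀ a, Function.Injective (op a))
    (hfin : ∀ q : CycOrbits op, {x | Quot.mk _ x = q}.Finite) (w : Fin n → CycOrbits op) :
    orbitSum hfin w ∈ LinearMap.ker (cycBdAll op n) := by
  cases n with
  | zero => rfl
  | succ n =>
    refine cycBd_sum_single_eq_zero hinj fun i v hv => ?_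
    simpa [tupleOrbits_twist] using hv

variable (op n) in
/-- The map on chains that replaces every entry of a tuple by its orbit. -/
noncomputable def orbitProj : cycCh X n →ₗ[ℤ] (Fin n → CycOrbits op) →₀ ℤ :=
  Finsupp.lmapDomain ℤ ℤ (tupleOrbits op)

theorem orbitProj_single (v : Fin n → X) (a : ℤ) :
    orbitProj op n (Finsupp.single v a) = Finsupp.single (tupleOrbits op v) a :=
  Finsupp.mapDomain_single

theorem orbitProj_comp_cycBd : orbitProj op n ∘ₗ cycBd op n = 0 := by
  refine Finsupp.lhom_ext' fun v => LinearMap.ext_ring ?_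
  simp [cycBd_single_one, orbitProj_single, tupleOrbits_op]

theorem exists_orbitProj_orbitSum_eq_single
    (hfin : ∀ q : CycOrbits op, {x | Quot.mk _ x = q}.Finite) (w : Fin n → CycOrbits op) :
    ∃ k : ℤ, k ≠ 0 ∧ orbitProj op n (orbitSum hfin w) = Finsupp.single w k := by
  have hw := finite_setOf_tupleOrbits_eq op hfin w
  have hne : hw.toFinset.Nonempty := hw.toFinset_nonempty.2 (tupleOrbits_surjective op w)
  refine ⟨hw.toFinset.card, by exact_mod_cast hne.card_ne_zero, ?_⟩
  calc orbitProj op n (orbitSum hfin w)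
      = ∑ v ∈ hw.toFinset, Finsupp.single (tupleOrbits op v) 1 := by
        simp only [orbitSum, map_sum, orbitProj_single]
    _ = ∑ _v ∈ hw.toFinset, Finsupp.single w 1 :=
        Finset.sum_congr rfl fun v hv => by rw [hw.mem_toFinset.1 hv]
    _ = Finsupp.single w (hw.toFinset.card : ℤ) := by simp

end Chains

section Homology

variable {X : Type*} (op : X → X → X) (n : ℕ)

/-- The homology `H_n = ker ∂_n / im ∂_{n+1}`. The image is pulled back to the kernel, so the
definition does not presuppose `∂_n ∘ ∂_{n+1} = 0`. -/
abbrev cycHomology : Type _ :=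
  ↥(LinearMap.ker (cycBdAll op n)) ⧸
    Submodule.comap (LinearMap.ker (cycBdAll op n)).subtype
      (LinearMap.range (cycBdAll op (n + 1)))

/-- The map induced by `orbitProj` on homology. -/
noncomputable def homologyOrbitProj : cycHomology op n →ₗ[ℤ] (Fin n → CycOrbits op) →₀ ℤ :=
  Submodule.liftQ _ (orbitProj op n ∘ₗ (LinearMap.ker (cycBdAll op n)).subtype) <| by
    rintro ⟨_, _⟩ ⟨d, rfl⟩
    exact LinearMap.congr_fun orbitProj_comp_cycBd d

variable {op n}

/-- The homology class of the cycle `orbitSum hfin w`. -/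
noncomputable def orbitClass (hinj : ∀ a, Function.Injective (op a))
    (hfin : ∀ q : CycOrbits op, {x | Quot.mk _ x = q}.Finite) (w : Fin n → CycOrbits op) :
    cycHomology op n :=
  Submodule.Quotient.mk ⟨orbitSum hfin w, orbitSum_mem_ker_cycBdAll hinj hfin w⟩

theorem linearIndependent_orbitClass (hinj : ∀ a, Function.Injective (op a))
    (hfin : ∀ q : CycOrbits op, {x | Quot.mk _ x = q}.Finite) :
    LinearIndependent ℤ (orbitClass hinj hfin (n := n)) := by
  choose k hk hproj using exists_orbitProj_orbitSum_eq_single (n := n) hfin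
  have hcomp : homologyOrbitProj op n ∘ orbitClass hinj hfin = fun w => Finsupp.single w (k w) :=
    funext hproj
  apply LinearIndependent.of_comp (homologyOrbitProj op n)
  rw [hcomp]
  exact Finsupp.linearIndependent_single_of_ne_zero hk

end Homology

theorem statement_17_general {X : Type*} (op : X → X → X)
    (hinj : ∀ a, Function.Injective (op a))
    (hfin : ∀ q : CycOrbits op, {x | Quot.mk _ x = q}.Finite) (n : ℕ) :
    Cardinal.mk (CycOrbits op) ^ n ≤ Module.rank ℤ (cycHomology op n) := by
  simpa using (linearIndependent_orbitClass (n := n) hinj hfin).cardinal_le_rank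

/-- For a finite cycle set `X` with `m` orbits, the `n`-th Betti
number of its homology `H_n = ker ∂_n / im ∂_{n+1}` is at least `mⁿ`. -/
theorem statement_17 {X : Type} [Finite X] (op : X → X → X)
    (hbij : ∀ a : X, Function.Bijective (op a))
    (hcyc : ∀ a b c : X, op (op a b) (op a c) = op (op b a) (op b c))
    (m : ℕ)
    (hm : Nat.card (Quot (fun a b : X => ∃ y, b = op y a)) = m) :
    ∀ n : ℕ, (m : Cardinal) ^ n ≤
      Module.rank ℤ
        (↥(LinearMap.ker (cycBdAll op n)) ⧸
          Submodule.comap (LinearMap.ker (cycBdAll op n)).subtype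
            (LinearMap.range (cycBdAll op (n + 1)))) := by
  rw [← hm, Nat.cast_card]
  exact statement_17_general op (fun a => (hbij a).injective) fun _ => Set.toFinite _
end

section
/- Let (X, σ) be a left non-degenerate braided set, A an abelian group, and G := G_{(X,σ)} its structure group: the group presented with generating set X and relations a·b = l(a,b)·r(a,b) (product in the free group) for all a, b ∈ X, with canonical map ι : X → G. Then: (i) there is a unique left action of G on the set X such that ι(a) acts by b ↦ a⊛b for every a ∈ X; (ii) equipping Fun(X, A) with the right G-action (γ·g)(b) := γ(g·b), the map θ ↦ ((x, y) ↦ θ(ι(x))(y)) is an isomorphism of abelian groups from Z¹(G, Fun(X,A)) := { θ : G → Fun(X,A) : θ(gh) = θ(h) + θ(g)·h for all g, h ∈ G } onto the group Z²_⋆(X, A) of star 2-cocycles, and it carries the subgroup B¹(G, Fun(X,A)) := { g ↦ γ − γ·g : γ ∈ Fun(X,A) } onto the subgroup B²_⋆(X, A) of star 2-coboundaries; consequently it induces an isomorphism of abelian groups H¹(G, Fun(X,A)) ≅ H²(X, A) := Z²_⋆(X,A)/B²_⋆(X,A). -/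
/-- The relations `a·b = l(a,b)·r(a,b)` of the structure group. -/
def ybRels {X : Type*} (σ : X × X → X × X) : Set (FreeGroup X) :=
  {w | ∃ a b : X, w = FreeGroup.of a * FreeGroup.of b *
    (FreeGroup.of ((σ (a, b)).1) * FreeGroup.of ((σ (a, b)).2))⁻¹}

/-- The bijection `b ↦ a⊛b` of `X` (with inverse `b ↦ r(b,a)`). -/
def starPerm {X : Type*} (σ : X × X → X × X) (star : X → X → X)
    (hstar1 : ∀ a b : X, (σ (star b a, b)).2 = a)
    (hstar2 : ∀ a b : X, star b ((σ (a, b)).2) = a) (a : X) : Equiv.Perm X where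
  toFun := fun b => star a b
  invFun := fun b => (σ (b, a)).2
  left_inv := fun b => hstar1 b a
  right_inv := fun b => hstar2 b a

/-- The group `Z¹(G, Fun(X,A))` of 1-cocycles, where `G` acts on `X` via `φ`
and on `Fun(X,A)` by `(γ·g)(b) = γ(g·b)`. -/
def Z1sub {X A : Type*} [AddCommGroup A] {rels : Set (FreeGroup X)}
    (φ : PresentedGroup rels →* Equiv.Perm X) :
    AddSubgroup (PresentedGroup rels → X → A) where
  carrier := {θ | ∀ g h b, θ (g * h) b = θ h b + θ g (φ h b)}
  add_mem' := by
    intro θ₁ θ₂ h1 h2 g h b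
    simp only [Pi.add_apply, h1 g h b, h2 g h b]
    abel
  zero_mem' := by intro g h b; simp
  neg_mem' := by
    intro θ hθ g h b
    simp only [Pi.neg_apply, hθ g h b]
    abel

/-- The group `Z²_⋆(X, A)` of star 2-cocycles. -/
def Z2sub {X A : Type*} [AddCommGroup A] (star dot : X → X → X) :
    AddSubgroup (X × X → A) where
  carrier := {f | ∀ x y z : X,
    f (x, z) + f (star x y, star x z) = f (y, z) + f (dot y x, star y z)}
  add_mem' := by
    intro f g hf hg x y z
    simp only [Pi.add_apply]
    conv_lhs => rw [add_add_add_comm]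
    rw [hf x y z, hg x y z]
    abel
  zero_mem' := by intro x y z; simp
  neg_mem' := by
    intro f hf x y z
    simp only [Pi.neg_apply, ← neg_add]
    rw [hf x y z]

/-- The homomorphism `γ ↦ (g ↦ γ − γ·g)` whose range is `B¹(G, Fun(X,A))`. -/
def cobHom1 {X A : Type*} [AddCommGroup A] {rels : Set (FreeGroup X)}
    (φ : PresentedGroup rels →* Equiv.Perm X) :
    (X → A) →+ (PresentedGroup rels → X → A) where
  toFun γ := fun g b => γ b - γ (φ g b)
  map_zero' := by funext g b; simp
  map_add' γ δ := by funext g b; simp only [Pi.add_apply]; abel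

/-- The homomorphism `γ ↦ ((x,y) ↦ γ(x⊛y) − γ(y))` whose range is `B²_⋆(X, A)`. -/
def cobHom2 {X A : Type*} [AddCommGroup A] (star : X → X → X) :
    (X → A) →+ (X × X → A) where
  toFun γ := fun q => γ (star q.1 q.2) - γ q.2
  map_zero' := by funext q; simp
  map_add' γ δ := by funext q; simp only [Pi.add_apply]; abel

/-!
A map `θ : G → Fun(X, A)` is a 1-cocycle over an action `φ : G → Perm X` exactly when
`g ↦ (φ g, θ g)` is a homomorphism into the semidirect product of `Fun(X, A)` and `Perm X`. For a
group given by generators and relations such a homomorphism is determined by its values on the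
generators, and these may be prescribed as soon as they satisfy the relations. For the structure
group, the relations say in the permutation coordinate that `⊛` defines an action, which is one
component of the Yang–Baxter equation, and in the function coordinate that the prescribed values
form a star 2-cocycle, written in the variables `a = x ⊛ y`, `b = x`.
-/

section Quotient

variable {M N : Type*} [AddGroup M] [AddGroup N] {Z B : AddSubgroup M} {Z' B' : AddSubgroup N}

/-- The isomorphism between two subgroups on which a homomorphism restricts to a bijection. -/
noncomputable def addSubgroupEquivOfBijOn (r : M →+ N) (hr : Set.BijOn r Z Z') : Z ≃+ Z' :=
  AddEquiv.ofBijective ((r.comp Z.subtype).codRestrict Z' fun z => hr.mapsTo z.2) hr.bijective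

theorem map_addSubgroupOf_addSubgroupEquivOfBijOn (r : M →+ N) (hr : Set.BijOn r Z Z')
    (hBZ : B ≤ Z) :
    (B.addSubgroupOf Z).map (addSubgroupEquivOfBijOn r hr : Z →+ Z') =
      (B.map r).addSubgroupOf Z' := by
  ext f
  simp only [AddSubgroup.mem_map, AddSubgroup.mem_addSubgroupOf]
  constructor
  · rintro ⟨θ, hθ, rfl⟩
    exact ⟨θ, hθ, rfl⟩
  · rintro ⟨θ, hθ, hθf⟩
    exact ⟨⟨θ, hBZ hθ⟩, hθ, Subtype.ext hθf⟩

theorem exists_quotient_addEquiv_of_bijOn [(B.addSubgroupOf Z).Normal]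
    [(B'.addSubgroupOf Z').Normal] (r : M →+ N) (hr : Set.BijOn r Z Z') (hBZ : B ≤ Z)
    (hB : B.map r = B') :
    ∃ e : (Z ⧸ B.addSubgroupOf Z) ≃+ (Z' ⧸ B'.addSubgroupOf Z'),
      ∀ (θ : Z) (f : Z'), (f : N) = r θ → e (QuotientAddGroup.mk θ) = QuotientAddGroup.mk f := by
  refine ⟨QuotientAddGroup.congr _ _ (addSubgroupEquivOfBijOn r hr) ?_, fun θ f hf => ?_⟩
  · rw [map_addSubgroupOf_addSubgroupEquivOfBijOn r hr hBZ, hB]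
  · obtain rfl : f = addSubgroupEquivOfBijOn r hr θ := Subtype.ext hf
    rfl

end Quotient

/-- The semidirect product of `Fun(X, A)` and `Perm X`, where a permutation `π` acts by
`γ ↦ γ ∘ π⁻¹`. -/
abbrev FunSemidirect (X A : Type*) [AddCommGroup A] : Type _ :=
  (X → Multiplicative A) ⋊[mulAutArrow] Equiv.Perm X

namespace FunSemidirect

variable {X A : Type*} [AddCommGroup A]

/-- The function coordinate of an element of `FunSemidirect X A`. It is the field `left` composed
with the permutation, which turns the left action `γ ↦ γ ∘ π⁻¹` into the right action
`γ ↦ γ ∘ π` of the cocycle condition. -/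
def fn (w : FunSemidirect X A) : X → A :=
  fun b => (w.left (w.right b)).toAdd

/-- The element of `FunSemidirect X A` with given permutation and given coordinate `fn`. -/
def pair (π : Equiv.Perm X) (γ : X → A) : FunSemidirect X A :=
  ⟨fun b => .ofAdd (γ (π⁻¹ b)), π⟩

@[simp]
theorem right_pair (π : Equiv.Perm X) (γ : X → A) : (pair π γ).right = π :=
  rfl

@[simp]
theorem fn_pair (π : Equiv.Perm X) (γ : X → A) : (pair π γ).fn = γ := by
  funext b
  simp [fn, pair]

theorem ext_fn {w w' : FunSemidirect X A} (hright : w.right = w'.right) (hfn : w.fn = w'.fn) :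
    w = w' := by
  refine SemidirectProduct.ext (funext fun b => ?_) hright
  simpa [fn, hright] using congrFun hfn (w'.right⁻¹ b)

theorem fn_mul_apply (w w' : FunSemidirect X A) (b : X) :
    (w * w').fn b = w'.fn b + w.fn (w'.right b) := by
  have hcancel : mulAutArrow w.right w'.left (w.right (w'.right b)) = w'.left (w'.right b) :=
    congrArg w'.left (w.right.symm_apply_apply (w'.right b))
  simp only [fn, SemidirectProduct.mul_left, SemidirectProduct.mul_right, Equiv.Perm.mul_apply,
    Pi.mul_apply, toAdd_mul, hcancel, add_comm]

end FunSemidirect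

section Cocycle

open FunSemidirect

variable {X A : Type*} [AddCommGroup A] {rels : Set (FreeGroup X)}
  {φ : PresentedGroup rels →* Equiv.Perm X}

/-- The lift `g ↦ (φ g, θ g)` of `φ` to the semidirect product given by a 1-cocycle `θ`. -/
def cocycleLift (θ : Z1sub (A := A) φ) : PresentedGroup rels →* FunSemidirect X A :=
  MonoidHom.mk' (fun g => pair (φ g) (θ.1 g)) fun g h =>
    ext_fn (map_mul φ g h) <| funext fun b => by
      simpa only [fn_mul_apply, fn_pair, right_pair] using θ.2 g h b

theorem fn_comp_mem_Z1sub (Φ : PresentedGroup rels →* FunSemidirect X A)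
    (hΦ : SemidirectProduct.rightHom.comp Φ = φ) : (fun g => (Φ g).fn) ∈ Z1sub (A := A) φ := by
  subst hΦ
  intro g h b
  simp only [map_mul, fn_mul_apply, MonoidHom.comp_apply, SemidirectProduct.rightHom_eq_right]

theorem eq_of_mem_Z1sub_of_eq_on_generators {θ θ' : PresentedGroup rels → X → A}
    (hθ : θ ∈ Z1sub φ) (hθ' : θ' ∈ Z1sub φ)
    (h : ∀ a, θ (PresentedGroup.of a) = θ' (PresentedGroup.of a)) : θ = θ' := by
  have hlift : cocycleLift ⟨θ, hθ⟩ = cocycleLift ⟨θ', hθ'⟩ :=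
    PresentedGroup.ext fun a => congrArg (pair _) (h a)
  funext g
  simpa only [cocycleLift, MonoidHom.mk'_apply, fn_pair] using
    congrArg fn (DFunLike.congr_fun hlift g)

theorem range_cobHom1_le_Z1sub : (cobHom1 (A := A) φ).range ≤ Z1sub φ := by
  rintro _ ⟨γ, rfl⟩ g h b
  simp [cobHom1]

variable (X A rels) in
/-- The homomorphism sending `θ` to `(x, y) ↦ θ(ι x)(y)`. -/
def evalGenerators : (PresentedGroup rels → X → A) →+ (X × X → A) where
  toFun θ q := θ (PresentedGroup.of q.1) q.2
  map_zero' := rfl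
  map_add' _ _ := rfl

theorem map_evalGenerators_range_cobHom1 {star : X → X → X}
    (hφ : ∀ a b, φ (PresentedGroup.of a) b = star a b) :
    (cobHom1 (A := A) φ).range.map (evalGenerators X A rels) = (cobHom2 star).range := by
  have hneg (γ : X → A) : evalGenerators X A rels (cobHom1 φ γ) = cobHom2 star (-γ) := by
    funext q
    simp [evalGenerators, cobHom1, cobHom2, hφ, add_comm, sub_eq_add_neg]
  rw [AddMonoidHom.map_range]
  apply le_antisymm
  · rintro _ ⟨γ, rfl⟩
    exact ⟨-γ, (hneg γ).symm⟩
  · rintro _ ⟨γ, rfl⟩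
    exact ⟨-γ, (hneg (-γ)).trans (by rw [neg_neg])⟩

end Cocycle

section StructureGroup

open FunSemidirect

variable {X A : Type*} [AddCommGroup A] {σ : X × X → X × X}

theorem structureGroup_of_mul_of (a b : X) :
    (PresentedGroup.of a * PresentedGroup.of b : PresentedGroup (ybRels σ)) =
      PresentedGroup.of (σ (a, b)).1 * PresentedGroup.of (σ (a, b)).2 :=
  PresentedGroup.mk_eq_mk_of_mul_inv_mem ⟨a, b, rfl⟩

theorem existsUnique_structureGroup_hom {H : Type*} [Group H] (F : X → H)
    (hF : ∀ a b, F a * F b = F (σ (a, b)).1 * F (σ (a, b)).2) :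
    ∃! Φ : PresentedGroup (ybRels σ) →* H, ∀ a, Φ (PresentedGroup.of a) = F a := by
  have hrels : ∀ w ∈ ybRels σ, FreeGroup.lift F w = 1 := by
    rintro _ ⟨a, b, rfl⟩
    simp only [map_mul, map_inv, FreeGroup.lift_apply_of, mul_inv_eq_one, hF a b]
  exact ⟨PresentedGroup.toGroup hrels, fun a => PresentedGroup.toGroup.of hrels,
    fun Φ hΦ => PresentedGroup.ext fun a => (hΦ a).trans (PresentedGroup.toGroup.of hrels).symm⟩

variable {φ : PresentedGroup (ybRels σ) →* Equiv.Perm X}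

theorem exists_mem_Z1sub_evalGenerators_eq {f : X × X → A}
    (hf : ∀ a b z, f (b, z) + f (a, φ (PresentedGroup.of b) z) =
      f ((σ (a, b)).2, z) + f ((σ (a, b)).1, φ (PresentedGroup.of (σ (a, b)).2) z)) :
    ∃ θ ∈ Z1sub φ, evalGenerators X A (ybRels σ) θ = f := by
  let F (a : X) : FunSemidirect X A := pair (φ (PresentedGroup.of a)) fun z => f (a, z)
  have hF (a b : X) : F a * F b = F (σ (a, b)).1 * F (σ (a, b)).2 := by
    refine ext_fn ?_ (funext fun z => ?_)
    · simp only [F, SemidirectProduct.mul_right, right_pair, ← map_mul]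
      rw [structureGroup_of_mul_of]
    · simpa only [F, fn_mul_apply, fn_pair, right_pair] using hf a b z
  obtain ⟨Φ, hΦ, -⟩ := existsUnique_structureGroup_hom F hF
  have hright : SemidirectProduct.rightHom.comp Φ = φ :=
    PresentedGroup.ext fun a => congrArg SemidirectProduct.right (hΦ a)
  refine ⟨fun g => (Φ g).fn, fn_comp_mem_Z1sub Φ hright, funext fun q => ?_⟩
  simp only [evalGenerators, AddMonoidHom.coe_mk, ZeroHom.coe_mk, hΦ, F, fn_pair]

theorem bijOn_evalGenerators_Z1sub :
    Set.BijOn (evalGenerators X A (ybRels σ)) (Z1sub (A := A) φ)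
      {f | ∀ a b z, f (b, z) + f (a, φ (PresentedGroup.of b) z) =
        f ((σ (a, b)).2, z) + f ((σ (a, b)).1, φ (PresentedGroup.of (σ (a, b)).2) z)} := by
  refine ⟨fun θ hθ a b z => ?_, fun θ hθ θ' hθ' h => ?_,
    fun f hf => exists_mem_Z1sub_evalGenerators_eq hf⟩
  · calc
      _ = θ (PresentedGroup.of a * PresentedGroup.of b) z := (hθ _ _ z).symm
      _ = θ (PresentedGroup.of (σ (a, b)).1 * PresentedGroup.of (σ (a, b)).2) z := by
        rw [structureGroup_of_mul_of]
      _ = _ := hθ _ _ z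
  · exact eq_of_mem_Z1sub_of_eq_on_generators hθ hθ' fun a => funext fun b => congrFun h (a, b)

end StructureGroup

section LeftNondegenerate

variable {X A : Type*} [AddCommGroup A] {σ : X × X → X × X} {star : X → X → X}

theorem starPerm_mul_starPerm (hstar1 : ∀ a b : X, (σ (star b a, b)).2 = a)
    (hstar2 : ∀ a b : X, star b ((σ (a, b)).2) = a)
    (hYB : s12 σ ∘ s23 σ ∘ s12 σ = s23 σ ∘ s12 σ ∘ s23 σ) (a b : X) :
    starPerm σ star hstar1 hstar2 a * starPerm σ star hstar1 hstar2 b =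
      starPerm σ star hstar1 hstar2 (σ (a, b)).1 * starPerm σ star hstar1 hstar2 (σ (a, b)).2 := by
  -- For the inverses `x ↦ r(x, a)` this is the third component of the Yang–Baxter equation.
  refine inv_injective (Equiv.ext fun x => ?_)
  rw [mul_inv_rev, mul_inv_rev]
  exact congrArg (fun p => p.2.2) (congrFun hYB (x, a, b))

theorem mem_Z2sub_iff_forall_braiding (hstar1 : ∀ a b : X, (σ (star b a, b)).2 = a)
    (hstar2 : ∀ a b : X, star b ((σ (a, b)).2) = a) {dot : X → X → X}
    (hdot : ∀ a b : X, dot a b = (σ (star b a, b)).1) {f : X × X → A} :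
    f ∈ Z2sub star dot ↔ ∀ a b z, f (b, z) + f (a, star b z) =
      f ((σ (a, b)).2, z) + f ((σ (a, b)).1, star (σ (a, b)).2 z) := by
  constructor
  · intro hf a b z
    simpa only [hdot, hstar2] using hf b (σ (a, b)).2 z
  · intro hf x y z
    simpa only [hdot, hstar1] using hf (star x y) x z

end LeftNondegenerate

/-- For a left non-degenerate braided set `(X, σ)` with structure
group `G = ⟨X | ab = l(a,b)r(a,b)⟩`: (i) there is a unique action of `G` on `X`
with generators acting by `b ↦ a⊛b`; (ii) `θ ↦ ((x,y) ↦ θ(ι x)(y))` is an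
additive bijection from `Z¹(G, Fun(X,A))` onto the star 2-cocycles
`Z²_⋆(X,A)`, carrying `B¹` onto `B²_⋆`, and hence inducing an isomorphism
`H¹(G, Fun(X,A)) ≅ H²(X,A)`. -/
theorem statement_18 {X A : Type*} [AddCommGroup A] (σ : X × X → X × X)
    (hYB : s12 σ ∘ s23 σ ∘ s12 σ = s23 σ ∘ s12 σ ∘ s23 σ)
    (star : X → X → X)
    (hstar1 : ∀ a b : X, (σ (star b a, b)).2 = a)
    (hstar2 : ∀ a b : X, star b ((σ (a, b)).2) = a)
    (dot : X → X → X)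
    (hdot : ∀ a b : X, dot a b = (σ (star b a, b)).1) :
    (∃! φ : PresentedGroup (ybRels σ) →* Equiv.Perm X,
      ∀ a : X, φ (PresentedGroup.of a) = starPerm σ star hstar1 hstar2 a) ∧
    (∀ φ : PresentedGroup (ybRels σ) →* Equiv.Perm X,
      (∀ a : X, φ (PresentedGroup.of a) = starPerm σ star hstar1 hstar2 a) →
      Set.BijOn
        (fun (θ : PresentedGroup (ybRels σ) → X → A) =>
          fun q : X × X => θ (PresentedGroup.of q.1) q.2)
        (Z1sub (A := A) φ : Set (PresentedGroup (ybRels σ) → X → A))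
        (Z2sub (A := A) star dot : Set (X × X → A)) ∧
      (∀ θ θ' : PresentedGroup (ybRels σ) → X → A,
        (fun q : X × X => (θ + θ') (PresentedGroup.of q.1) q.2)
          = (fun q : X × X => θ (PresentedGroup.of q.1) q.2)
            + (fun q : X × X => θ' (PresentedGroup.of q.1) q.2)) ∧
      ((fun (θ : PresentedGroup (ybRels σ) → X → A) =>
          fun q : X × X => θ (PresentedGroup.of q.1) q.2) ''
          ((cobHom1 (A := A) φ).range : Set (PresentedGroup (ybRels σ) → X → A))
        = ((cobHom2 (A := A) star).range : Set (X × X → A))) ∧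
      (∃ e : (↥(Z1sub (A := A) φ) ⧸
              ((cobHom1 (A := A) φ).range.addSubgroupOf (Z1sub (A := A) φ))) ≃+
             (↥(Z2sub (A := A) star dot) ⧸
              ((cobHom2 (A := A) star).range.addSubgroupOf
                (Z2sub (A := A) star dot))),
        ∀ (θ : ↥(Z1sub (A := A) φ)) (fz : ↥(Z2sub (A := A) star dot)),
          (fz : X × X → A)
              = (fun q : X × X =>
                  (θ : PresentedGroup (ybRels σ) → X → A)
                    (PresentedGroup.of q.1) q.2) →
          e (QuotientAddGroup.mk θ) = QuotientAddGroup.mk fz)) := by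
  refine ⟨existsUnique_structureGroup_hom _ (starPerm_mul_starPerm hstar1 hstar2 hYB),
    fun φ hφ => ?_⟩
  have hφ_apply (a b : X) : φ (PresentedGroup.of a) b = star a b := by
    rw [hφ]
    rfl
  have hbij : Set.BijOn (evalGenerators X A (ybRels σ)) (Z1sub (A := A) φ)
      (Z2sub (A := A) star dot) := by
    convert bijOn_evalGenerators_Z1sub (A := A) (φ := φ) using 1
    ext f
    simp only [SetLike.mem_coe, mem_Z2sub_iff_forall_braiding hstar1 hstar2 hdot, hφ_apply,
      Set.mem_ofPred_eq]
  have hcob := map_evalGenerators_range_cobHom1 (A := A) hφ_apply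
  exact ⟨hbij, map_add (evalGenerators X A (ybRels σ)), congrArg SetLike.coe hcob,
    exists_quotient_addEquiv_of_bijOn _ hbij range_cobHom1_le_Z1sub hcob⟩
end
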